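/- arXiv:1309.7580 — 5 statements merged into one kernel-verified Lean document; each statement's English description precedes it below -/
import Mathlib

section
/- For all positive integers u and v there exists a constant κ = κ(u, v) > 0 with the following property. Let p be a prime and define f(x,y) = x^u y^v (x + y). Then for any sets A, B, C ⊆ 𝔽_p^* one has |f(A,B)| · |B·C| ≥ κ · min( |A|·|B|²·|C| / p, p·|B| ). -/
open Pointwise

/-!
Each pair `(a, c) ∈ A × C` gives the line `y = a ^ (u + 1) / c ^ v + (a ^ u / c ^ (v + 1)) x`, which
contains the `|B|` points `(b c, f(a, b) / (b c) ^ v)`. These points lie in a set of size at most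
`|f(A, B)| |B · C|`, and every line arises from at most `u + v + 1` pairs. In a plane over a field
with `q` elements, a second moment computation shows that a set of points which meets every line of
a large family in at least `|B|` points has to be large: on average a line meets a set of `n`
points in only `n / q` of them.
-/

section Incidence

open Finset

variable {ι α : Type*} [DecidableEq α]

lemma sum_card_filter_mem (L : Finset ι) (s : ι → Finset α) (P : Finset α) :
    ∑ x ∈ P, #{i ∈ L | x ∈ s i} = ∑ i ∈ L, #(P ∩ s i) := by
  simpa [bipartiteAbove, bipartiteBelow, filter_mem_eq_inter] using
    sum_card_bipartiteAbove_eq_sum_card_bipartiteBelow (s := P) (t := L) fun x i => x ∈ s i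

variable [Fintype α]

lemma sum_sq_card_filter_mem (L : Finset ι) (s : ι → Finset α) :
    ∑ x, #{i ∈ L | x ∈ s i} ^ 2 = ∑ i ∈ L, ∑ j ∈ L, #(s i ∩ s j) := by
  calc ∑ x, #{i ∈ L | x ∈ s i} ^ 2
      = ∑ x, #{z ∈ L ×ˢ L | x ∈ s z.1 ∩ s z.2} := by
        simp only [sq, ← card_product, ← filter_product, mem_inter]
    _ = ∑ z ∈ L ×ˢ L, #(s z.1 ∩ s z.2) := by
        simpa only [bipartiteAbove, bipartiteBelow, filter_univ_mem] using
          sum_card_bipartiteAbove_eq_sum_card_bipartiteBelow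
            (s := univ) (t := L ×ˢ L) fun x z => x ∈ s z.1 ∩ s z.2
    _ = ∑ i ∈ L, ∑ j ∈ L, #(s i ∩ s j) := sum_product ..

-- `hinter` bounds the intersection of distinct members by `k ^ 2 / |α|`, the expected size of the
-- intersection of two independent random sets of size `k`.
variable [Nonempty α] {L : Finset ι} {s : ι → Finset α} {k : ℕ}
  (hcard : ∀ i ∈ L, #(s i) = k)
  (hinter : ∀ i ∈ L, ∀ j ∈ L, i ≠ j → Fintype.card α * #(s i ∩ s j) ≤ k ^ 2)

include hcard hinter

lemma sum_sq_card_filter_mem_le :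
    ∑ x, (#{i ∈ L | x ∈ s i} : ℝ) ^ 2 ≤ #L ^ 2 * (k ^ 2 / Fintype.card α) + #L * k := by
  classical
  have pair_le : ∀ i ∈ L, ∀ j ∈ L,
      (#(s i ∩ s j) : ℝ) ≤ k ^ 2 / Fintype.card α + if i = j then (k : ℝ) else 0 := by
    intro i hi j hj
    split_ifs with hij
    · subst hij
      rw [inter_self, hcard i hi]
      exact le_add_of_nonneg_left (by positivity)
    · rw [add_zero, le_div_iff₀' (by simp [Fintype.card_pos])]
      exact_mod_cast hinter i hi j hj hij
  calc ∑ x, (#{i ∈ L | x ∈ s i} : ℝ) ^ 2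
      = ∑ i ∈ L, ∑ j ∈ L, (#(s i ∩ s j) : ℝ) := by exact_mod_cast sum_sq_card_filter_mem L s
    _ ≤ ∑ i ∈ L, ∑ j ∈ L, (k ^ 2 / Fintype.card α + if i = j then (k : ℝ) else 0) :=
      sum_le_sum fun i hi => sum_le_sum fun j hj => pair_le i hi j hj
    _ = #L ^ 2 * (k ^ 2 / Fintype.card α) + #L * k := by
      simp only [sum_add_distrib, sum_const, nsmul_eq_mul, sum_ite_eq, sum_ite_mem, inter_self]
      ring

lemma sum_sq_card_filter_mem_sub_mean_le :
    ∑ x, ((#{i ∈ L | x ∈ s i} : ℝ) - #L * k / Fintype.card α) ^ 2 ≤ #L * k := by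
  set N := (Fintype.card α : ℝ) with hN
  have hN0 : 0 < N := by simp [hN, Fintype.card_pos]
  have first_moment : ∑ x, (#{i ∈ L | x ∈ s i} : ℝ) = #L * k := by
    rw [← Nat.cast_sum, sum_card_filter_mem]
    simp [sum_congr rfl hcard]
  calc ∑ x, ((#{i ∈ L | x ∈ s i} : ℝ) - #L * k / N) ^ 2
      = ∑ x, (#{i ∈ L | x ∈ s i} : ℝ) ^ 2 - 2 * (∑ x, (#{i ∈ L | x ∈ s i} : ℝ)) * (#L * k / N)
          + N * (#L * k / N) ^ 2 := by
        simp only [sub_sq, sum_add_distrib, sum_sub_distrib, ← sum_mul, ← mul_sum, sum_const,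
          card_univ, nsmul_eq_mul, hN]
    _ = ∑ x, (#{i ∈ L | x ∈ s i} : ℝ) ^ 2 - #L ^ 2 * (k ^ 2 / N) := by
        rw [first_moment]
        field_simp
        ring
    _ ≤ #L * k := by linarith [sum_sq_card_filter_mem_le hcard hinter]

lemma sq_sum_card_inter_sub_le (P : Finset α) :
    ((∑ i ∈ L, #(P ∩ s i) : ℝ) - #P * (#L * k / Fintype.card α)) ^ 2 ≤ #P * (#L * k) := by
  calc ((∑ i ∈ L, #(P ∩ s i) : ℝ) - #P * (#L * k / Fintype.card α)) ^ 2
      = (∑ x ∈ P, ((#{i ∈ L | x ∈ s i} : ℝ) - #L * k / Fintype.card α)) ^ 2 := by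
        rw [sum_sub_distrib, sum_const, nsmul_eq_mul, ← Nat.cast_sum, ← Nat.cast_sum,
          sum_card_filter_mem]
    _ ≤ #P * ∑ x ∈ P, ((#{i ∈ L | x ∈ s i} : ℝ) - #L * k / Fintype.card α) ^ 2 :=
        sq_sum_le_card_mul_sum_sq
    _ ≤ #P * ∑ x, ((#{i ∈ L | x ∈ s i} : ℝ) - #L * k / Fintype.card α) ^ 2 := by
        gcongr
        exact subset_univ P
    _ ≤ #P * (#L * k) := by
        gcongr
        exact sum_sq_card_filter_mem_sub_mean_le hcard hinter

lemma min_le_four_mul_card_mul_of_le_card_inter {P : Finset α} {b : ℕ}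
    (hrich : ∀ i ∈ L, b ≤ #(P ∩ s i)) :
    min ((#L : ℝ) * b ^ 2) (Fintype.card α * b) ≤ 4 * #P * k := by
  set N := (Fintype.card α : ℝ) with hN
  have hN0 : 0 < N := by simp [hN, Fintype.card_pos]
  rcases le_or_gt (N * b) (2 * #P * k) with hlarge | hsmall
  · exact (min_le_right _ _).trans (hlarge.trans (by gcongr; norm_num))
  rcases L.eq_empty_or_nonempty with rfl | hL
  · exact (min_le_left _ _).trans (by rw [card_empty, Nat.cast_zero, zero_mul]; positivity)
  have hL0 : (0 : ℝ) < #L := by exact_mod_cast hL.card_pos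
  have incidences_ge : (#L : ℝ) * b ≤ ∑ i ∈ L, (#(P ∩ s i) : ℝ) := by
    exact_mod_cast L.card_nsmul_le_sum _ b hrich
  have mean_le : #P * (#L * k / N) ≤ #L * b / 2 := by
    rw [← mul_div_assoc, div_le_iff₀ hN0]
    linarith [mul_le_mul_of_nonneg_left hsmall.le hL0.le]
  have sq_le : (#L * b / 2 : ℝ) ^ 2 ≤ #P * (#L * k) :=
    (pow_le_pow_left₀ (by positivity) (by linarith) 2).trans
      (sq_sum_card_inter_sub_le hcard hinter P)
  exact (min_le_left _ _).trans (le_of_mul_le_mul_left (by linarith) hL0)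

end Incidence

section AffinePlane

open Finset

variable {F : Type*} [Field F] [Fintype F] [DecidableEq F]

/-- The non-vertical line with intercept `l.1` and slope `l.2` in the affine plane `F × F`. -/
def affineLine (l : F × F) : Finset (F × F) := {q | q.2 = l.1 + l.2 * q.1}

@[simp]
lemma mem_affineLine {l q : F × F} : q ∈ affineLine l ↔ q.2 = l.1 + l.2 * q.1 := by
  simp [affineLine]

lemma card_affineLine (l : F × F) : #(affineLine l) = Fintype.card F := by
  have : affineLine l = univ.image fun x => (x, l.1 + l.2 * x) := by
    ext ⟨x, y⟩
    simp [eq_comm]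
  rw [this, card_image_of_injective _ fun x y h => congrArg Prod.fst h, card_univ]

lemma card_affineLine_inter_le_one {l l' : F × F} (h : l ≠ l') :
    #(affineLine l ∩ affineLine l') ≤ 1 := by
  rw [card_le_one]
  rintro ⟨x, y⟩ hq ⟨x', y'⟩ hq'
  simp only [mem_inter, mem_affineLine] at hq hq'
  have hx : x = x' := by
    by_contra hne
    have hslope : l.2 = l'.2 := mul_right_cancel₀ (sub_ne_zero.2 hne) (by
      linear_combination hq.2 - hq.1 + hq'.1 - hq'.2)
    have hintercept : l.1 = l'.1 := by linear_combination hq.2 - hq.1 - x * hslope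
    exact h (Prod.ext hintercept hslope)
  rw [Prod.mk.injEq, hq.1, hq'.1, hx]
  exact ⟨rfl, rfl⟩

lemma min_le_four_mul_card_of_le_card_inter_affineLine {L P : Finset (F × F)} {b : ℕ}
    (hrich : ∀ l ∈ L, b ≤ #(P ∩ affineLine l)) :
    min ((#L : ℝ) * b ^ 2 / Fintype.card F) (Fintype.card F * b) ≤ 4 * #P := by
  have hq : (0 : ℝ) < Fintype.card F := by simp [Fintype.card_pos]
  have key := min_le_four_mul_card_mul_of_le_card_inter (fun l _ => card_affineLine l)
    (fun l _ l' _ hne => by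
      rw [Fintype.card_prod, ← sq]
      exact mul_le_of_le_one_right' (card_affineLine_inter_le_one hne)) hrich
  rwa [← div_le_iff₀ hq, ← min_div_div_right hq.le, Fintype.card_prod, Nat.cast_mul, mul_assoc,
    mul_div_cancel_left₀ _ hq.ne'] at key

end AffinePlane

section LineParam

open Finset

variable {F : Type*} [Field F] {u v : ℕ}

/-- The intercept and slope of the line through the points `(b c, f(a, b) / (b c) ^ v)`, `b ≠ 0`,
where `z = (a, c)` and `f(x, y) = x ^ u y ^ v (x + y)`. -/
def lineParam (u v : ℕ) (z : F × F) : F × F :=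
  (z.1 ^ (u + 1) / z.2 ^ v, z.1 ^ u / z.2 ^ (v + 1))

lemma div_pow_eq_lineParam (u v : ℕ) (a : F) {b c : F} (hb : b ≠ 0) (hc : c ≠ 0) :
    a ^ u * b ^ v * (a + b) / (b * c) ^ v =
      (lineParam u v (a, c)).1 + (lineParam u v (a, c)).2 * (b * c) := by
  simp only [lineParam]
  field_simp
  ring

lemma mul_eq_of_lineParam_eq {a c : F} {l : F × F} (ha : a ≠ 0) (hc : c ≠ 0)
    (h : lineParam u v (a, c) = l) : a * c = l.1 / l.2 := by
  subst h
  simp only [lineParam]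
  field_simp
  ring

lemma pow_eq_of_lineParam_eq {a c : F} {l : F × F} (ha : a ≠ 0) (hc : c ≠ 0)
    (h : lineParam u v (a, c) = l) : a ^ (u + v + 1) = l.1 * (l.1 / l.2) ^ v := by
  rw [← mul_eq_of_lineParam_eq ha hc h, ← h]
  simp only [lineParam]
  field_simp
  ring

variable [DecidableEq F] {A B C : Finset F}

lemma card_mul_card_le_mul_card_image_lineParam (u v : ℕ) (hA : ∀ a ∈ A, a ≠ 0)
    (hC : ∀ c ∈ C, c ≠ 0) :
    #A * #C ≤ (u + v + 1) * #((A ×ˢ C).image (lineParam u v)) := by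
  rw [← card_product]
  refine card_le_mul_card_image _ _ fun l _ => ?_
  set roots := Polynomial.nthRoots (u + v + 1) (l.1 * (l.1 / l.2) ^ v)
  have fiber : ∀ z ∈ {z ∈ A ×ˢ C | lineParam u v z = l},
      z.1 ≠ 0 ∧ z.2 ≠ 0 ∧ lineParam u v (z.1, z.2) = l := fun z hz => by
    rw [mem_filter, mem_product] at hz
    exact ⟨hA _ hz.1.1, hC _ hz.1.2, hz.2⟩
  calc #{z ∈ A ×ˢ C | lineParam u v z = l}
      ≤ #roots.toFinset := by
        refine card_le_card_of_injOn Prod.fst (fun z hz => ?_) fun z hz z' hz' hfst => ?_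
        · obtain ⟨ha, hc, h⟩ := fiber z hz
          rw [mem_coe, Multiset.mem_toFinset, Polynomial.mem_nthRoots (Nat.succ_pos _)]
          exact pow_eq_of_lineParam_eq ha hc h
        · obtain ⟨ha, hc, h⟩ := fiber z hz
          obtain ⟨ha', hc', h'⟩ := fiber z' hz'
          refine Prod.ext hfst (mul_left_cancel₀ ha ?_)
          rw [mul_eq_of_lineParam_eq ha hc h, hfst, mul_eq_of_lineParam_eq ha' hc' h']
    _ ≤ Multiset.card roots := Multiset.toFinset_card_le _
    _ ≤ u + v + 1 := Polynomial.card_nthRoots _ _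

lemma card_le_card_inter_affineLine_lineParam [Fintype F] (hB : ∀ b ∈ B, b ≠ 0) {a c : F}
    (ha : a ∈ A) (hc : c ∈ C) (hc0 : c ≠ 0) :
    #B ≤ #((((B * C) ×ˢ image₂ (fun x y => x ^ u * y ^ v * (x + y)) A B).image
      fun z => (z.1, z.2 / z.1 ^ v)) ∩ affineLine (lineParam u v (a, c))) := by
  refine card_le_card_of_injOn (fun b => (b * c, a ^ u * b ^ v * (a + b) / (b * c) ^ v))
    (fun b hb => ?_) fun b _ b' _ h => mul_right_cancel₀ hc0 (congrArg Prod.fst h)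
  rw [mem_coe, mem_inter, mem_affineLine]
  exact ⟨mem_image.2 ⟨(b * c, a ^ u * b ^ v * (a + b)),
    mk_mem_product (mul_mem_mul hb hc) (mem_image₂_of_mem ha hb), rfl⟩,
    div_pow_eq_lineParam u v a (hB b hb) hc0⟩

end LineParam

open Finset in
theorem stmt_11_general {F : Type*} [Field F] [Fintype F] [DecidableEq F] (u v : ℕ)
    {A B C : Finset F} (hA : ∀ a ∈ A, a ≠ 0) (hB : ∀ b ∈ B, b ≠ 0) (hC : ∀ c ∈ C, c ≠ 0) :
    min ((#A : ℝ) * #B ^ 2 * #C / Fintype.card F) (Fintype.card F * #B) ≤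
      4 * (u + v + 1) * (#(image₂ (fun x y => x ^ u * y ^ v * (x + y)) A B) * #(B * C)) := by
  set S := image₂ (fun x y => x ^ u * y ^ v * (x + y)) A B
  set P := ((B * C) ×ˢ S).image fun z => (z.1, z.2 / z.1 ^ v)
  set L := (A ×ˢ C).image (lineParam u v)
  have hP : (#P : ℝ) ≤ #S * #(B * C) := by
    rw [mul_comm]
    exact_mod_cast card_image_le.trans_eq (card_product _ _)
  have hL : (#A : ℝ) * #C ≤ (u + v + 1) * #L := by
    exact_mod_cast card_mul_card_le_mul_card_image_lineParam u v hA hC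
  have hrich : ∀ l ∈ L, #B ≤ #(P ∩ affineLine l) := forall_mem_image.2 fun z hz =>
    have ⟨ha, hc⟩ := mem_product.1 hz
    card_le_card_inter_affineLine_lineParam hB ha hc (hC _ hc)
  have one_le : (1 : ℝ) ≤ u + v + 1 := le_add_of_nonneg_left (by positivity)
  calc min ((#A : ℝ) * #B ^ 2 * #C / Fintype.card F) (Fintype.card F * #B)
      ≤ min ((u + v + 1 : ℝ) * ((#L : ℝ) * #B ^ 2 / Fintype.card F))
          ((u + v + 1) * (Fintype.card F * #B)) := by
        refine min_le_min ?_ (le_mul_of_one_le_left (by positivity) one_le)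
        rw [mul_right_comm, ← mul_div_assoc, ← mul_assoc]
        gcongr
    _ = (u + v + 1) * min ((#L : ℝ) * #B ^ 2 / Fintype.card F) (Fintype.card F * #B) :=
        (mul_min_of_nonneg _ _ (by positivity)).symm
    _ ≤ (u + v + 1) * (4 * (#S * #(B * C))) := by
        gcongr
        exact (min_le_four_mul_card_of_le_card_inter_affineLine hrich).trans (by gcongr)
    _ = 4 * (u + v + 1) * (#S * #(B * C)) := by ring

/-- Inequality (5.1): for all positive integers `u, v` there is `κ = κ(u,v) > 0` such
that for `f(x,y) = x^u y^v (x+y)` and all `A, B, C ⊆ 𝔽_p^*`,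
`|f(A,B)|·|B·C| ≥ κ·min(|A||B|²|C|/p, p|B|)`. -/
theorem stmt_11 (u v : ℕ) (hu : 0 < u) (hv : 0 < v) :
    ∃ κ : ℝ, 0 < κ ∧ ∀ (p : ℕ), p.Prime →
    ∀ A B C : Finset (ZMod p), (∀ a ∈ A, a ≠ 0) → (∀ b ∈ B, b ≠ 0) → (∀ c ∈ C, c ≠ 0) →
      ((Finset.image₂ (fun x y => x ^ u * y ^ v * (x + y)) A B).card : ℝ) *
          ((B * C).card : ℝ) ≥
        κ * min ((A.card : ℝ) * (B.card : ℝ) ^ 2 * (C.card : ℝ) / (p : ℝ))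
          ((p : ℝ) * (B.card : ℝ)) := by
  refine ⟨1 / (4 * (u + v + 1)), by positivity, fun p hp A B C hA hB hC => ?_⟩
  have : Fact p.Prime := ⟨hp⟩
  rw [ge_iff_le, one_div, inv_mul_le_iff₀ (by positivity)]
  simpa only [ZMod.card] using stmt_11_general u v hA hB hC
end

section
/- For all positive integers u and v there exists a constant κ = κ(u, v) > 0 with the following property. Let p be a prime and define f(x,y) = x^u y^v (x + y). Then for any sets A, B ⊆ 𝔽_p^* one has max( |f(A,B)|, |A·B| ) ≥ κ · min( |A|·|B| / √p, √(p·|B|) ). -/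
open Pointwise

/-!
Put `f(x, y) = x ^ u y ^ v (x + y)`. For `a₁, a₂ ∈ A`, `b ∈ B` and `c = a₂ b`,
`a₂ ^ v f(a₁, b) = a₁ ^ u c ^ (v + 1) a₂⁻¹ + a₁ ^ (u + 1) c ^ v`,
that is, the point `(a₂⁻¹, a₂ ^ v f(a₁, b))` lies on a line whose slope and intercept depend only
on `(c, a₁)`. So the `|A| ^ 2 |B|` triples `(a₁, a₂, b)` give as many incidences between at most
`|f(A, B)| |A|` points and the `|A · B| |A|` lines indexed by `(c, a₁)`, in which each line is
repeated at most `u + v + 1` times. In the plane over a field with `q` elements, the numbers of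
points of a set `S` on the `q ^ 2` non-vertical lines have mean `|S| / q`, and their squared
deviations from it sum to at most `q |S|`, because two points lie on at most one common line. By
Cauchy–Schwarz this bounds the number of incidences from above.
-/

section

open Finset

section DoubleCounting

variable {α β : Type*}

lemma sum_card_bipartiteBelow_sq (r : α → β → Prop) [∀ a b, Decidable (r a b)]
    (s : Finset α) (t : Finset β) :
    ∑ b ∈ t, #(s.bipartiteBelow r b) ^ 2 =
      ∑ a ∈ s, ∑ a' ∈ s, #{b ∈ t | r a b ∧ r a' b} := by
  calc ∑ b ∈ t, #(s.bipartiteBelow r b) ^ 2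
      = ∑ b ∈ t, #((s ×ˢ s).bipartiteBelow (fun x b => r x.1 b ∧ r x.2 b) b) := by
        simp only [bipartiteBelow, ← card_product, ← filter_product, sq]
    _ = ∑ a ∈ s, ∑ a' ∈ s, #{b ∈ t | r a b ∧ r a' b} := by
        rw [← sum_card_bipartiteAbove_eq_sum_card_bipartiteBelow, sum_product]
        rfl

lemma sum_comp_le_mul_sum {R : Type*} [Semiring R] [PartialOrder R] [IsOrderedRing R]
    [Fintype β] [DecidableEq β] {s : Finset α} {φ : α → β} {k : ℕ}
    (hφ : ∀ b, #{a ∈ s | φ a = b} ≤ k) {g : β → R} (hg : ∀ b, 0 ≤ g b) :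
    ∑ a ∈ s, g (φ a) ≤ k * ∑ b, g b := by
  calc ∑ a ∈ s, g (φ a) = ∑ b, ∑ a ∈ s with φ a = b, g b := (sum_fiberwise' s φ g).symm
    _ = ∑ b, (#{a ∈ s | φ a = b} : R) * g b := by simp only [sum_const, nsmul_eq_mul]
    _ ≤ ∑ b, (k : R) * g b := by
        gcongr with b
        · exact hg b
        · exact hφ b
    _ = k * ∑ b, g b := (mul_sum ..).symm

end DoubleCounting

section Incidences

variable {F : Type*} [Field F]

/-- Incidence between the point `P` and the non-vertical line `y = m x + c` of the affine plane
over `F`, the line being encoded by the pair `l = (m, c)` of its slope and intercept. -/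
abbrev OnLine (P l : F × F) : Prop := P.2 = l.1 * P.1 + l.2

lemma OnLine.line_eq_of_ne {P P' l l' : F × F} (hne : P ≠ P') (hP : OnLine P l) (hP' : OnLine P' l)
    (hQ : OnLine P l') (hQ' : OnLine P' l') : l = l' := by
  have hx : P.1 ≠ P'.1 := fun h => hne (Prod.ext h (by rw [hP, hP', h]))
  have hslope : l.1 = l'.1 :=
    mul_right_cancel₀ (sub_ne_zero.2 hx) (by linear_combination hP' - hP + hQ - hQ')
  exact Prod.ext hslope (by linear_combination hQ - hP - P.1 * hslope)

variable [Fintype F] [DecidableEq F]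

lemma card_lines_through_point (P : F × F) : #{l | OnLine P l} = Fintype.card F := by
  refine card_nbij' Prod.fst (fun m => (m, P.2 - m * P.1)) ?_ ?_ ?_ ?_
  · exact fun _ _ => mem_univ _
  · intro m _
    simp [OnLine]
  · rintro ⟨m, c⟩ hl
    simp_all
  · exact fun _ _ => rfl

lemma card_lines_through_two_points_le_one {P P' : F × F} (hne : P ≠ P') :
    #{l | OnLine P l ∧ OnLine P' l} ≤ 1 := by
  simp only [card_le_one, mem_filter_univ]
  exact fun l hl l' hl' => OnLine.line_eq_of_ne hne hl.1 hl.2 hl'.1 hl'.2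

lemma sum_card_onLine (S : Finset (F × F)) :
    ∑ l, #{P ∈ S | OnLine P l} = Fintype.card F * #S := by
  calc ∑ l, #{P ∈ S | OnLine P l} = ∑ P ∈ S, #{l | OnLine P l} :=
        (sum_card_bipartiteAbove_eq_sum_card_bipartiteBelow OnLine).symm
    _ = Fintype.card F * #S := by
        simp only [card_lines_through_point, sum_const, smul_eq_mul, mul_comm]

lemma sum_card_onLine_sq_le (S : Finset (F × F)) :
    ∑ l, #{P ∈ S | OnLine P l} ^ 2 ≤ Fintype.card F * #S + #S ^ 2 := by
  have hpair (P P' : F × F) :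
      #{l | OnLine P l ∧ OnLine P' l} ≤ (if P = P' then Fintype.card F else 0) + 1 := by
    split_ifs with h
    · subst h
      simp only [and_self, card_lines_through_point, Nat.le_succ]
    · simpa using card_lines_through_two_points_le_one h
  calc ∑ l, #{P ∈ S | OnLine P l} ^ 2
      = ∑ P ∈ S, ∑ P' ∈ S, #{l | OnLine P l ∧ OnLine P' l} :=
        sum_card_bipartiteBelow_sq OnLine S univ
    _ ≤ ∑ P ∈ S, ∑ P' ∈ S, ((if P = P' then Fintype.card F else 0) + 1) := by
        gcongr
        exact hpair _ _
    _ = ∑ _ ∈ S, (Fintype.card F + #S) := by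
        refine sum_congr rfl fun _ hP => ?_
        simp [sum_add_distrib, hP]
    _ = Fintype.card F * #S + #S ^ 2 := by
        rw [sum_const, smul_eq_mul]
        ring

lemma sum_card_onLine_sub_mean_sq_le (S : Finset (F × F)) :
    ∑ l, ((#{P ∈ S | OnLine P l} : ℝ) - #S / Fintype.card F) ^ 2 ≤ Fintype.card F * #S := by
  have hfirst : ∑ l, (#{P ∈ S | OnLine P l} : ℝ) = Fintype.card F * #S := by
    exact_mod_cast sum_card_onLine S
  have hsecond : ∑ l, (#{P ∈ S | OnLine P l} : ℝ) ^ 2 ≤ Fintype.card F * #S + (#S : ℝ) ^ 2 := by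
    exact_mod_cast sum_card_onLine_sq_le S
  calc ∑ l, ((#{P ∈ S | OnLine P l} : ℝ) - #S / Fintype.card F) ^ 2
      = ∑ l, (#{P ∈ S | OnLine P l} : ℝ) ^ 2
          - 2 * (∑ l, (#{P ∈ S | OnLine P l} : ℝ)) * (#S / Fintype.card F)
          + (Fintype.card F : ℝ) ^ 2 * (#S / Fintype.card F) ^ 2 := by
        simp only [sub_sq, sum_add_distrib, sum_sub_distrib, mul_sum, sum_mul, sum_const,
          card_univ, Fintype.card_prod, nsmul_eq_mul, Nat.cast_mul, sq (Fintype.card F : ℝ)]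
    _ = ∑ l, (#{P ∈ S | OnLine P l} : ℝ) ^ 2 - (#S : ℝ) ^ 2 := by
        rw [hfirst]
        field_simp
        ring
    _ ≤ Fintype.card F * #S := by linarith

theorem sum_card_onLine_comp_le {ι : Type*} {X : Finset ι} {φ : ι → F × F} {k : ℕ}
    (hφ : ∀ l, #{x ∈ X | φ x = l} ≤ k) (S : Finset (F × F)) :
    ∑ x ∈ X, (#{P ∈ S | OnLine P (φ x)} : ℝ) ≤
      #X * #S / Fintype.card F + √(k * Fintype.card F * (#X * #S)) := by
  let deviation (l : F × F) : ℝ := #{P ∈ S | OnLine P l} - #S / Fintype.card F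
  have hsq : (∑ x ∈ X, deviation (φ x)) ^ 2 ≤ k * Fintype.card F * (#X * #S) := by
    calc (∑ x ∈ X, deviation (φ x)) ^ 2
        ≤ #X * ∑ x ∈ X, deviation (φ x) ^ 2 := sq_sum_le_card_mul_sum_sq
      _ ≤ #X * (k * ∑ l, deviation l ^ 2) := by
          gcongr
          exact sum_comp_le_mul_sum hφ fun l => sq_nonneg (deviation l)
      _ ≤ #X * (k * (Fintype.card F * #S)) := by
          gcongr
          exact sum_card_onLine_sub_mean_sq_le S
      _ = k * Fintype.card F * (#X * #S) := by ring
  calc ∑ x ∈ X, (#{P ∈ S | OnLine P (φ x)} : ℝ)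
      = #X * #S / Fintype.card F + ∑ x ∈ X, deviation (φ x) := by
        simp only [deviation, sum_sub_distrib, sum_const, nsmul_eq_mul]
        ring
    _ ≤ #X * #S / Fintype.card F + √(k * Fintype.card F * (#X * #S)) := by
        gcongr
        exact Real.le_sqrt_of_sq_le hsq

end Incidences

section RealInequalities

lemma min_le_of_mul_le_add_sqrt {n b m q k : ℝ} (hn : 0 ≤ n) (hb : 0 ≤ b) (hm : 0 ≤ m)
    (hq : 0 < q) (hk : 1 ≤ k) (h : n * b ≤ n * m / q + √(k * q * (n * m))) :
    min (n * b ^ 2 / q) (q * b) ≤ 4 * k * m := by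
  have hmk : m ≤ k * m := le_mul_of_one_le_left hm hk
  rcases hn.eq_or_lt with rfl | hn
  · exact (min_le_left _ _).trans (by rw [zero_mul, zero_div]; positivity)
  rcases le_total (n * b / 2) (n * m / q) with hmain | herror
  · have : q * b ≤ 2 * m := by
      field_simp at hmain
      linarith
    exact (min_le_right _ _).trans (by linarith)
  · have hsqrt : n * b / 2 ≤ √(k * q * (n * m)) := by linarith
    have hsq := (Real.le_sqrt (by positivity) (by positivity)).1 hsqrt
    refine (min_le_left _ _).trans ?_
    rw [div_le_iff₀ hq]
    exact le_of_mul_le_mul_left (by linarith) hn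

lemma sq_min_div_sqrt_sqrt_le {x y q : ℝ} (hx : 0 ≤ x) (hy : 0 ≤ y) (hq : 0 ≤ q) :
    min (x / √q) √y ^ 2 ≤ min (x ^ 2 / q) y := by
  refine le_min ?_ ?_
  · calc min (x / √q) √y ^ 2 ≤ (x / √q) ^ 2 := by
          gcongr
          exact min_le_left _ _
      _ = x ^ 2 / q := by rw [div_pow, Real.sq_sqrt hq]
  · calc min (x / √q) √y ^ 2 ≤ √y ^ 2 := by
          gcongr
          exact min_le_right _ _
      _ = y := Real.sq_sqrt hy

end RealInequalities

section SumProduct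

variable {F : Type*} [Field F] (u v : ℕ)

/-- The point `(a⁻¹, d a ^ v)` attached to a pair `(d, a)`; in the incidence argument `d` runs over
the values of `x ^ u * y ^ v * (x + y)`. -/
def incidencePoint (z : F × F) : F × F := (z.2⁻¹, z.1 * z.2 ^ v)

/-- The line with slope `a ^ u c ^ (v + 1)` and intercept `a ^ (u + 1) c ^ v`, in the encoding of
`OnLine`, attached to a pair `(c, a)`; in the incidence argument `c` runs over a product set. -/
def incidenceLine (z : F × F) : F × F :=
  (z.2 ^ u * z.1 ^ (v + 1), z.2 ^ (u + 1) * z.1 ^ v)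

lemma onLine_incidencePoint_incidenceLine {a₂ : F} (ha₂ : a₂ ≠ 0) (a₁ b : F) :
    OnLine (incidencePoint v (a₁ ^ u * b ^ v * (a₁ + b), a₂))
      (incidenceLine u v (a₂ * b, a₁)) := by
  simp only [OnLine, incidencePoint, incidenceLine]
  field_simp
  ring

variable [DecidableEq F]

lemma card_filter_incidenceLine_eq_le {X : Finset (F × F)} (hX : ∀ z ∈ X, z.1 ≠ 0 ∧ z.2 ≠ 0)
    (l : F × F) : #{z ∈ X | incidenceLine u v z = l} ≤ u + v + 1 := by
  -- On the fibre over `(m, t)`, `a ^ (u + v + 1) = t ^ (v + 1) / m ^ v` and `c = a m / t`.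
  let roots := (Polynomial.nthRoots (u + v + 1) (l.2 ^ (v + 1) / l.1 ^ v)).toFinset
  have hmaps : Set.MapsTo Prod.snd {z ∈ X | incidenceLine u v z = l} (roots : Set F) := by
    rintro ⟨c, a⟩ hz
    obtain ⟨hmem, rfl⟩ := hz
    obtain ⟨hc, ha⟩ : c ≠ 0 ∧ a ≠ 0 := hX _ hmem
    simp only [roots, incidenceLine, mem_coe, Multiset.mem_toFinset]
    rw [Polynomial.mem_nthRoots (by omega), eq_div_iff (by positivity)]
    ring
  have hinj : Set.InjOn Prod.snd ({z ∈ X | incidenceLine u v z = l} : Set (F × F)) := by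
    rintro ⟨c, a⟩ hz ⟨c', _⟩ hz' (rfl : a = _)
    obtain ⟨hmem, rfl⟩ := hz
    obtain ⟨-, hl⟩ := hz'
    obtain ⟨hc, ha⟩ : c ≠ 0 ∧ a ≠ 0 := hX _ hmem
    simp only [incidenceLine, Prod.mk.injEq] at hl
    have hprod : c' * (a ^ (u + 1) * c ^ v) = c * (a ^ (u + 1) * c ^ v) := by
      linear_combination a * hl.1 - c' * hl.2
    rw [mul_right_cancel₀ (by positivity) hprod]
  calc #{z ∈ X | incidenceLine u v z = l} ≤ #roots :=
        card_le_card_of_injOn Prod.snd (by simpa using hmaps) (by simpa using hinj)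
    _ ≤ u + v + 1 := (Multiset.toFinset_card_le _).trans (Polynomial.card_nthRoots _ _)

variable {A₁ A₂ B : Finset F}

lemma card_mul_card_mul_card_le_sum_card_onLine (hA₂ : 0 ∉ A₂) :
    #A₁ * #A₂ * #B ≤ ∑ z ∈ (A₂ * B) ×ˢ A₁,
      #{P ∈ (image₂ (fun x y => x ^ u * y ^ v * (x + y)) A₁ B ×ˢ A₂).image (incidencePoint v) |
        OnLine P (incidenceLine u v z)} := by
  rw [← card_sigma, ← card_product, ← card_product]
  refine card_le_card_of_injOn (fun t => ⟨(t.1.2 * t.2, t.1.1),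
    incidencePoint v (t.1.1 ^ u * t.2 ^ v * (t.1.1 + t.2), t.1.2)⟩) ?_ ?_
  · rintro ⟨⟨a₁, a₂⟩, b⟩ ht
    simp only [mem_coe, mem_product] at ht
    obtain ⟨⟨ha₁, ha₂⟩, hb⟩ := ht
    simp only [mem_coe, mem_sigma, mem_product, mem_filter]
    exact ⟨⟨mul_mem_mul ha₂ hb, ha₁⟩,
      mem_image_of_mem _ (mk_mem_product (mem_image₂_of_mem ha₁ hb) ha₂),
      onLine_incidencePoint_incidenceLine u v (ne_of_mem_of_not_mem ha₂ hA₂) a₁ b⟩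
  · rintro ⟨⟨a₁, a₂⟩, b⟩ ht ⟨⟨a₁', a₂'⟩, b'⟩ - heq
    simp only [mem_coe, mem_product] at ht
    simp only [incidencePoint, Sigma.mk.injEq, heq_eq_eq, Prod.mk.injEq, inv_inj] at heq
    obtain ⟨⟨hc, rfl⟩, rfl, -⟩ := heq
    rw [mul_left_cancel₀ (ne_of_mem_of_not_mem ht.1.2 hA₂) hc]

variable [Fintype F]

lemma card_mul_card_mul_card_le_add_sqrt (hA₁ : 0 ∉ A₁) (hA₂ : 0 ∉ A₂) (hB : 0 ∉ B) :
    (#A₁ * #A₂ * #B : ℝ) ≤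
      #A₁ * #A₂ * (#(image₂ (fun x y => x ^ u * y ^ v * (x + y)) A₁ B) * #(A₂ * B))
          / Fintype.card F +
        √((u + v + 1) * Fintype.card F *
          (#A₁ * #A₂ * (#(image₂ (fun x y => x ^ u * y ^ v * (x + y)) A₁ B) * #(A₂ * B)))) := by
  set D := image₂ (fun x y => x ^ u * y ^ v * (x + y)) A₁ B
  let X := (A₂ * B) ×ˢ A₁
  let S := (D ×ˢ A₂).image (incidencePoint v)
  have hX : ∀ z ∈ X, z.1 ≠ 0 ∧ z.2 ≠ 0 := by
    rintro ⟨c, a⟩ hz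
    obtain ⟨hc, ha⟩ := mem_product.1 hz
    obtain ⟨a₂, ha₂, b, hb, rfl⟩ := mem_mul.1 hc
    exact ⟨mul_ne_zero (ne_of_mem_of_not_mem ha₂ hA₂) (ne_of_mem_of_not_mem hb hB),
      ne_of_mem_of_not_mem ha hA₁⟩
  have hcard : (#X * #S : ℝ) ≤ #A₁ * #A₂ * (#D * #(A₂ * B)) := by
    have hS : #S ≤ #D * #A₂ := card_image_le.trans_eq (card_product ..)
    calc (#X * #S : ℝ) ≤ #(A₂ * B) * #A₁ * (#D * #A₂) := by
          rw [card_product, Nat.cast_mul]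
          gcongr
          exact_mod_cast hS
      _ = #A₁ * #A₂ * (#D * #(A₂ * B)) := by ring
  calc (#A₁ * #A₂ * #B : ℝ)
      ≤ ∑ z ∈ X, (#{P ∈ S | OnLine P (incidenceLine u v z)} : ℝ) := by
        exact_mod_cast card_mul_card_mul_card_le_sum_card_onLine u v hA₂
    _ ≤ #X * #S / Fintype.card F + √((u + v + 1 : ℕ) * Fintype.card F * (#X * #S)) :=
        sum_card_onLine_comp_le (card_filter_incidenceLine_eq_le u v hX) S
    _ ≤ _ := by
        push_cast
        gcongr

theorem min_le_card_image₂_mul_card_mul (hA₁ : 0 ∉ A₁) (hA₂ : 0 ∉ A₂) (hB : 0 ∉ B) :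
    min (#A₁ * #A₂ * (#B : ℝ) ^ 2 / Fintype.card F) (Fintype.card F * #B) ≤
      4 * (u + v + 1) *
        (#(image₂ (fun x y => x ^ u * y ^ v * (x + y)) A₁ B) * #(A₂ * B)) :=
  min_le_of_mul_le_add_sqrt (by positivity) (by positivity) (by positivity)
    (by exact_mod_cast Fintype.card_pos) (le_add_of_nonneg_left (by positivity))
    (card_mul_card_mul_card_le_add_sqrt u v hA₁ hA₂ hB)

theorem stmt_12_general {A B : Finset F} (hA : 0 ∉ A) (hB : 0 ∉ B) :
    1 / (2 * √(u + v + 1)) *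
        min (#A * #B / √(Fintype.card F)) √(Fintype.card F * #B) ≤
      max (#(image₂ (fun x y => x ^ u * y ^ v * (x + y)) A B) : ℝ) #(A * B) := by
  set D := image₂ (fun x y => x ^ u * y ^ v * (x + y)) A B
  set M : ℝ := max #D #(A * B)
  set μ : ℝ := min (#A * #B / √(Fintype.card F)) √(Fintype.card F * #B)
  have hsq : μ ^ 2 ≤ (2 * √(u + v + 1) * M) ^ 2 := by
    calc μ ^ 2 ≤ min ((#A * #B : ℝ) ^ 2 / Fintype.card F) (Fintype.card F * #B) :=
          sq_min_div_sqrt_sqrt_le (by positivity) (by positivity) (by positivity)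
      _ = min (#A * #A * (#B : ℝ) ^ 2 / Fintype.card F) (Fintype.card F * #B) := by
          rw [mul_pow, sq (#A : ℝ)]
      _ ≤ 4 * (u + v + 1) * (#D * #(A * B)) :=
          min_le_card_image₂_mul_card_mul u v hA hA hB
      _ ≤ 4 * (u + v + 1) * (M * M) := by
          gcongr
          · exact le_max_left _ _
          · exact le_max_right _ _
      _ = (2 * √(u + v + 1) * M) ^ 2 := by
          rw [mul_pow, mul_pow, Real.sq_sqrt (by positivity)]
          ring
  rw [one_div_mul_eq_div, div_le_iff₀' (by positivity)]
  exact le_of_sq_le_sq hsq (by positivity)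

end SumProduct

end

/-- Remark after (5.1): for all positive integers `u, v` there is `κ = κ(u,v) > 0`
such that for `f(x,y) = x^u y^v (x+y)` and all `A, B ⊆ 𝔽_p^*`,
`max(|f(A,B)|, |A·B|) ≥ κ·min(|A||B|/√p, √(p|B|))`. -/
theorem stmt_12 (u v : ℕ) (hu : 0 < u) (hv : 0 < v) :
    ∃ κ : ℝ, 0 < κ ∧ ∀ (p : ℕ), p.Prime →
    ∀ A B : Finset (ZMod p), (∀ a ∈ A, a ≠ 0) → (∀ b ∈ B, b ≠ 0) →
      max ((Finset.image₂ (fun x y => x ^ u * y ^ v * (x + y)) A B).card : ℝ)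
          ((A * B).card : ℝ) ≥
        κ * min ((A.card : ℝ) * (B.card : ℝ) / Real.sqrt p)
          (Real.sqrt ((p : ℝ) * (B.card : ℝ))) := by
  refine ⟨1 / (2 * √(u + v + 1)), by positivity, fun p hp A B hA hB => ?_⟩
  have := Fact.mk hp
  simpa only [ZMod.card] using stmt_12_general u v (fun h => hA 0 h rfl) (fun h => hB 0 h rfl)
end

section
/- Fix a positive integer k, positive integers m and m', a real α with 1/2 < α < 1, and reals 0 < c₁ < c₂. Then there exist Δ > 0 and κ > 0 (depending only on k, m, m', α, c₁, c₂) with the following property. Let p be a prime, G a subgroup of 𝔽_p^*, and g, h : G → 𝔽_p^* functions such that: (i) for every z ∈ G, the sets {g(xz)/g(x) : x ∈ G} and {h(xz)/h(x) : x ∈ G} each have at most m elements; (ii) for every u ∈ G, μ of the function x ↦ g(x)·h(ux)·x on G is at most m. Define f(x,y) = g(x)h(y)(x^k + y^k). Let w : G → 𝔽_p^* be a function with μ(w) ≤ m', and let P_w(f)(x,y) = w(x)·f(x,y). Then for every set A ⊆ G with c₁·p^α < |A| < c₂·p^α one has max( |f(A,A)|, |P_w(f)(A,A)| ) ≥ κ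 · |A|^{1+Δ}. -/
open Pointwise

/-! Take `f(x, y) = g(x) h(y) (φ(x) + ψ(y))` over a finite field `F` with `q` elements, where `φ`
and `ψ` have bounded fibres. Let `S` and `T` be the value sets of `f` and of its `w`-shift on `A ×
A`, and let `V` be the set of pairs `(x, f(x, y))` with `f(x, y) ≠ 0`. For `ψ(y) ≠ ψ(y')` the
equation `f(x, y) = f(x, y')` determines `φ(x)`, so `f` has few collisions and `|V| ≫ |A|²`. If
`(x, v)` and `(x', v)` both lie in `V`, then `v = f(a, b)` for some `a, b ∈ A` and `w(x') v` is a
nonzero element of `T`; by Cauchy–Schwarz over `v ∈ S`, `|V|²` is at most `|S|` times the number of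
triples `(x', a, b)` with `w(x') f(a, b) ∈ T \ {0}`. Expanding that membership in multiplicative
characters of `F`, the trivial character contributes at most `|T| |A|³ / (q - 1)`. For a nontrivial
character, orthogonality makes the kernel `χ(u + v)` an operator of norm at most `√q`, so `∑ χ(f(a,
b)) ≪ |A| √q` whatever `g` and `h` are, and Parseval bounds the remaining sum by `|A| √q √(|T|
|A|)`. Therefore `|A|⁴ ≪ |S| (|T| |A|³ / q + |A| √q √(|T| |A|))`, which forces `max(|S|, |T|) ≫
|A|^(1 + Δ)` when `|A| ≍ q ^ α` with `1/2 < α < 1`. -/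

section ShiftedGrowth

open Finset ComplexConjugate

section Fibers

variable {ι β : Type*} [DecidableEq β]

/-- The multiplicity bound `μ(φ|_A) ≤ k`: every fibre of `φ` in `A` has at most `k` elements. -/
def FiberBound (A : Finset ι) (φ : ι → β) (k : ℕ) : Prop :=
  ∀ t, #{x ∈ A | φ x = t} ≤ k

theorem FiberBound.mono {A B : Finset ι} {φ : ι → β} {k : ℕ} (hφ : FiberBound B φ k)
    (hAB : A ⊆ B) : FiberBound A φ k := fun t =>
  (card_le_card (filter_subset_filter _ hAB)).trans (hφ t)

theorem fiberBound_of_injective (A : Finset ι) {φ : ι → β} (hφ : φ.Injective) :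
    FiberBound A φ 1 := fun _ =>
  card_le_one.mpr fun _ hx _ hy =>
    hφ <| (mem_filter.mp hx).2.trans (mem_filter.mp hy).2.symm

theorem fiberBound_pow {R : Type*} [CommRing R] [IsDomain R] [DecidableEq R] (A : Finset R)
    {k : ℕ} (hk : 0 < k) : FiberBound A (fun x => x ^ k) k := fun t => calc
  #{x ∈ A | x ^ k = t} ≤ #(Polynomial.nthRoots k t).toFinset := by
    refine card_le_card fun x hx => ?_
    simpa [Polynomial.mem_nthRoots hk] using (mem_filter.mp hx).2
  _ ≤ (Polynomial.nthRoots k t).card := Multiset.toFinset_card_le _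
  _ ≤ k := Polynomial.card_nthRoots k t

theorem sum_mul_comp_eq_sum_fiber_mul {R : Type*} [NonUnitalNonAssocSemiring R] [Fintype β]
    (A : Finset ι) (φ : ι → β) (a : ι → R) (F : β → R) :
    ∑ x ∈ A, a x * F (φ x) = ∑ t, (∑ x ∈ A with φ x = t, a x) * F t := by
  rw [← sum_fiberwise A φ]
  refine sum_congr rfl fun t _ => ?_
  rw [sum_mul]
  exact sum_congr rfl fun x hx => by rw [(mem_filter.mp hx).2]

theorem FiberBound.sum_norm_sq_sum_fiber_le {E : Type*} [SeminormedAddCommGroup E] [Fintype β]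
    {A : Finset ι} {φ : ι → β} {k : ℕ} (hφ : FiberBound A φ k) (a : ι → E) :
    ∑ t, ‖∑ x ∈ A with φ x = t, a x‖ ^ 2 ≤ k * ∑ x ∈ A, ‖a x‖ ^ 2 := by
  rw [← sum_fiberwise A φ, mul_sum]
  refine sum_le_sum fun t _ => ?_
  calc ‖∑ x ∈ A with φ x = t, a x‖ ^ 2
      ≤ (∑ x ∈ A with φ x = t, ‖a x‖) ^ 2 := by gcongr; exact norm_sum_le _ _
    _ ≤ #{x ∈ A | φ x = t} * ∑ x ∈ A with φ x = t, ‖a x‖ ^ 2 := sq_sum_le_card_mul_sum_sq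
    _ ≤ k * ∑ x ∈ A with φ x = t, ‖a x‖ ^ 2 := by gcongr; exact hφ t

theorem card_sq_le_card_image_mul_sum_card_fiber (A : Finset ι) (φ : ι → β) :
    #A ^ 2 ≤ #(A.image φ) * ∑ x ∈ A, #{y ∈ A | φ y = φ x} := by
  rw [card_eq_sum_card_image φ A, sum_comp (fun t => #{y ∈ A | φ y = t}) φ]
  simp_rw [smul_eq_mul, ← sq]
  exact sq_sum_le_card_mul_sum_sq

end Fibers

section Characters

theorem sum_norm_sq_sum_mul {ι κ : Type*} (s : Finset ι) (t : Finset κ) (b : κ → ℂ)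
    (K : ι → κ → ℂ) :
    ((∑ i ∈ s, ‖∑ v ∈ t, b v * K i v‖ ^ 2 : ℝ) : ℂ) =
      ∑ v ∈ t, ∑ w ∈ t, b v * conj (b w) * ∑ i ∈ s, K i v * conj (K i w) := by
  push_cast
  simp_rw [← Complex.mul_conj', map_sum, sum_mul_sum, mul_sum]
  rw [sum_comm]
  refine sum_congr rfl fun v _ => ?_
  rw [sum_comm]
  refine sum_congr rfl fun w _ => sum_congr rfl fun i _ => ?_
  rw [map_mul]
  ring

section Finite

variable {F : Type*} [Field F] [Finite F]

theorem norm_mulChar_apply_le_one (χ : MulChar F ℂ) (a : F) : ‖χ a‖ ≤ 1 := by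
  rcases eq_or_ne a 0 with rfl | ha
  · simp [MulChar.map_zero]
  · have := Fintype.ofFinite F
    have hroot : χ a ^ (Fintype.card F - 1) = 1 := by
      rw [← map_pow, FiniteField.pow_card_sub_one_eq_one a ha, map_one]
    exact (Complex.norm_eq_one_of_pow_eq_one hroot
      (Nat.sub_ne_zero_of_lt Fintype.one_lt_card)).le

theorem norm_sum_mulChar_le_card {ι : Type*} (χ : MulChar F ℂ) (A : Finset ι) (u : ι → F) :
    ‖∑ x ∈ A, χ (u x)‖ ≤ #A := by
  simpa using norm_sum_le_of_le A fun x _ => norm_mulChar_apply_le_one χ (u x)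

theorem sum_norm_sq_mulChar_comp_le_card {ι : Type*} (χ : MulChar F ℂ) (A : Finset ι) (u : ι → F) :
    ∑ x ∈ A, ‖χ (u x)‖ ^ 2 ≤ #A :=
  (sum_le_card_nsmul A _ 1 fun x _ =>
    pow_le_one₀ (norm_nonneg _) (norm_mulChar_apply_le_one χ (u x))).trans_eq (by simp)

theorem conj_mulChar_apply (χ : MulChar F ℂ) (a : F) : conj (χ a) = χ a⁻¹ := by
  rw [← MulChar.inv_apply', ← MulChar.star_apply', Complex.star_def]

end Finite

section Fintype

variable {F : Type*} [Field F] [Fintype F]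

theorem sum_mulChar_apply_eq_ite [DecidableEq F] [Fintype (MulChar F ℂ)] (a : F) :
    ∑ χ : MulChar F ℂ, χ a = if a = 1 then (Fintype.card F - 1 : ℂ) else 0 := by
  split_ifs with ha
  · have hcard : Fintype.card (MulChar F ℂ) = Fintype.card F - 1 := by
      rw [← Nat.card_eq_fintype_card, MulChar.card_eq_card_units_of_hasEnoughRootsOfUnity,
        Nat.card_eq_fintype_card, Fintype.card_units]
    simp [ha, hcard, Nat.cast_sub Fintype.card_pos]
  · obtain ⟨χ, hχ⟩ := MulChar.exists_apply_ne_one_of_hasEnoughRootsOfUnity F ℂ ha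
    refine eq_zero_of_mul_eq_self_left hχ ?_
    simp only [mul_sum, ← MulChar.mul_apply]
    exact Fintype.sum_bijective _ (Group.mulLeft_bijective χ) _ _ fun _ => rfl

theorem sum_mulChar_mul_conj_eq_ite [DecidableEq F] [Fintype (MulChar F ℂ)] (a : F) {b : F}
    (hb : b ≠ 0) :
    ∑ χ : MulChar F ℂ, χ a * conj (χ b) = if a = b then (Fintype.card F - 1 : ℂ) else 0 := by
  simp only [conj_mulChar_apply, ← map_mul, sum_mulChar_apply_eq_ite, mul_inv_eq_one₀ hb]

theorem sum_norm_sq_sum_mul_mulChar_le [Fintype (MulChar F ℂ)] (a : F → ℂ) :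
    ∑ χ : MulChar F ℂ, ‖∑ t, a t * χ t‖ ^ 2 ≤ (Fintype.card F - 1) * ∑ t, ‖a t‖ ^ 2 := by
  classical
  have parseval : ∑ χ : MulChar F ℂ, ‖∑ t, a t * χ t‖ ^ 2 =
      (Fintype.card F - 1) * ∑ t with t ≠ 0, ‖a t‖ ^ 2 := by
    have hunits (χ : MulChar F ℂ) : ∑ t, a t * χ t = ∑ t with t ≠ 0, a t * χ t :=
      .symm <| sum_filter_of_ne fun t _ ht h0 => ht (by simp [h0, MulChar.map_zero])
    apply Complex.ofReal_injective
    simp_rw [hunits]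
    rw [sum_norm_sq_sum_mul]
    push_cast
    rw [mul_sum]
    refine sum_congr rfl fun v hv => ?_
    rw [sum_congr rfl fun w hw =>
      by rw [sum_mulChar_mul_conj_eq_ite v (mem_filter.mp hw).2]]
    simp only [mul_ite, mul_zero, sum_ite_eq, if_pos hv, Complex.mul_conj']
    exact mul_comm _ _
  rw [parseval]
  have hq : (1 : ℝ) ≤ Fintype.card F := mod_cast Fintype.card_pos
  gcongr
  exact subset_univ _

theorem sum_norm_sq_sum_mulChar_comp_le [DecidableEq F] [Fintype (MulChar F ℂ)] {ι : Type*}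
    {A : Finset ι} {u : ι → F} {m : ℕ} (hu : FiberBound A u m) :
    ∑ χ : MulChar F ℂ, ‖∑ x ∈ A, χ (u x)‖ ^ 2 ≤ (Fintype.card F - 1) * (m * #A) := by
  have hq : (1 : ℝ) ≤ Fintype.card F := mod_cast Fintype.card_pos
  have hfibers (χ : MulChar F ℂ) :
      ∑ x ∈ A, χ (u x) = ∑ t, (∑ x ∈ A with u x = t, (1 : ℂ)) * χ t := by
    simpa only [one_mul] using sum_mul_comp_eq_sum_fiber_mul A u (fun _ => (1 : ℂ)) χ
  simp_rw [hfibers]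
  refine (sum_norm_sq_sum_mul_mulChar_le _).trans ?_
  gcongr
  simpa using hu.sum_norm_sq_sum_fiber_le fun _ => (1 : ℂ)

theorem sum_mulChar_add_mul_conj [DecidableEq F] {χ : MulChar F ℂ} (hχ : χ ≠ 1) (a b : F) :
    ∑ u, χ (u + a) * conj (χ (u + b)) = (if a = b then (Fintype.card F : ℂ) else 0) - 1 := by
  have hshift : ∑ u, χ (u + a) * conj (χ (u + b)) = ∑ v, χ (1 + (a - b) * v⁻¹) - 1 := by
    have hterm (v : F) : χ (v + (a - b)) * conj (χ v) =
        χ (1 + (a - b) * v⁻¹) - if v = 0 then 1 else 0 := by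
      rcases eq_or_ne v 0 with rfl | hv
      · simp [MulChar.map_zero]
      · rw [conj_mulChar_apply, ← map_mul, add_mul, mul_inv_cancel₀ hv, if_neg hv, sub_zero]
    rw [← Equiv.sum_comp (Equiv.subRight b)]
    simp only [Equiv.subRight_apply, sub_add_cancel, sub_add_eq_add_sub, add_sub_assoc, hterm,
      sum_sub_distrib, sum_ite_eq', mem_univ, if_true]
  rw [hshift]
  split_ifs with hab
  · simp [hab]
  · have hperm : ∑ v, χ (1 + (a - b) * v⁻¹) = ∑ v, χ v := Equiv.sum_comp
      ((Equiv.inv F).trans ((Equiv.mulLeft₀ (a - b) (sub_ne_zero.mpr hab)).trans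
        (Equiv.addLeft 1))) χ
    rw [hperm, MulChar.sum_eq_zero_of_ne_one hχ]

theorem sum_norm_sq_sum_mul_mulChar_add {χ : MulChar F ℂ} (hχ : χ ≠ 1) (b : F → ℂ) :
    ∑ u, ‖∑ v, b v * χ (u + v)‖ ^ 2 = Fintype.card F * ∑ v, ‖b v‖ ^ 2 - ‖∑ v, b v‖ ^ 2 := by
  classical
  apply Complex.ofReal_injective
  rw [sum_norm_sq_sum_mul]
  simp only [sum_mulChar_add_mul_conj hχ, mul_sub, mul_one, mul_ite, mul_zero, sum_sub_distrib,
    sum_ite_eq, mem_univ, if_true, ← sum_mul_sum, ← map_sum, Complex.mul_conj', ← sum_mul]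
  push_cast
  ring

theorem norm_sum_mul_mulChar_add_le {χ : MulChar F ℂ} (hχ : χ ≠ 1) (a b : F → ℂ) :
    ‖∑ u, a u * ∑ v, b v * χ (u + v)‖ ≤
      √((∑ u, ‖a u‖ ^ 2) * (Fintype.card F * ∑ v, ‖b v‖ ^ 2)) := calc
  _ ≤ ∑ u, ‖a u‖ * ‖∑ v, b v * χ (u + v)‖ :=
    (norm_sum_le _ _).trans_eq (sum_congr rfl fun _ _ => norm_mul _ _)
  _ ≤ √(∑ u, ‖a u‖ ^ 2) * √(∑ u, ‖∑ v, b v * χ (u + v)‖ ^ 2) :=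
    Real.sum_mul_le_sqrt_mul_sqrt _ _ _
  _ = √((∑ u, ‖a u‖ ^ 2) * ∑ u, ‖∑ v, b v * χ (u + v)‖ ^ 2) :=
    (Real.sqrt_mul (by positivity) _).symm
  _ ≤ _ := by
    rw [sum_norm_sq_sum_mul_mulChar_add hχ]
    gcongr
    exact sub_le_self _ (by positivity)

theorem norm_sum_mul_mulChar_comp_add_comp_le [DecidableEq F] {ι κ : Type*} {A : Finset ι}
    {B : Finset κ} {φ : ι → F} {ψ : κ → F} {k l : ℕ} (hφ : FiberBound A φ k) (hψ : FiberBound B ψ l)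
    {χ : MulChar F ℂ} (hχ : χ ≠ 1) (a : ι → ℂ) (b : κ → ℂ) :
    ‖∑ x ∈ A, a x * ∑ y ∈ B, b y * χ (φ x + ψ y)‖ ≤
      √((k * ∑ x ∈ A, ‖a x‖ ^ 2) * (Fintype.card F * (l * ∑ y ∈ B, ‖b y‖ ^ 2))) := by
  have hinner (u : F) : ∑ y ∈ B, b y * χ (u + ψ y) =
      ∑ v, (∑ y ∈ B with ψ y = v, b y) * χ (u + v) :=
    sum_mul_comp_eq_sum_fiber_mul B ψ b fun v => χ (u + v)
  simp_rw [hinner]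
  rw [sum_mul_comp_eq_sum_fiber_mul A φ a
    fun u => ∑ v, (∑ y ∈ B with ψ y = v, b y) * χ (u + v)]
  refine (norm_sum_mul_mulChar_add_le hχ _ _).trans ?_
  gcongr
  · exact hφ.sum_norm_sq_sum_fiber_le a
  · exact hψ.sum_norm_sq_sum_fiber_le b

theorem card_sub_one_mul_sum_card_mul_mem [DecidableEq F] [Fintype (MulChar F ℂ)] {ι κ : Type*}
    (I : Finset ι) (J : Finset κ) {T : Finset F} (hT : 0 ∉ T) (u : ι → F) (v : κ → F) :
    (Fintype.card F - 1 : ℂ) * ∑ j ∈ J, (#{i ∈ I | u i * v j ∈ T} : ℂ) =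
      ∑ χ : MulChar F ℂ, conj (∑ t ∈ T, χ t) * (∑ i ∈ I, χ (u i)) * ∑ j ∈ J, χ (v j) := by
  have hmem (b : F) : ∑ χ : MulChar F ℂ, conj (∑ t ∈ T, χ t) * χ b =
      if b ∈ T then (Fintype.card F - 1 : ℂ) else 0 := by
    simp_rw [map_sum, sum_mul]
    rw [sum_comm, sum_congr rfl fun t ht => by
      simp_rw [mul_comm (conj _)]
      rw [sum_mulChar_mul_conj_eq_ite b (ne_of_mem_of_not_mem ht hT)], sum_ite_eq]
  calc _ = ∑ j ∈ J, ∑ i ∈ I, ∑ χ : MulChar F ℂ, conj (∑ t ∈ T, χ t) * χ (u i * v j) := by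
        simp_rw [hmem, ← sum_filter, sum_const, nsmul_eq_mul, ← sum_mul, mul_comm]
    _ = ∑ χ : MulChar F ℂ, ∑ j ∈ J, ∑ i ∈ I, conj (∑ t ∈ T, χ t) * χ (u i * v j) := by
        rw [sum_comm (s := univ)]
        exact sum_congr rfl fun _ _ => sum_comm
    _ = _ := by
        simp_rw [map_mul, mul_sum, sum_mul, mul_assoc]

theorem sum_norm_mul_norm_sum_mulChar_le [DecidableEq F] [Fintype (MulChar F ℂ)] {ι κ : Type*}
    {A : Finset ι} {B : Finset κ} {u : ι → F} {v : κ → F} {m n : ℕ} (hu : FiberBound A u m)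
    (hv : FiberBound B v n) :
    ∑ χ : MulChar F ℂ, ‖∑ x ∈ A, χ (u x)‖ * ‖∑ y ∈ B, χ (v y)‖ ≤
      (Fintype.card F - 1) * √((m * #A) * (n * #B)) := by
  have hq : (0 : ℝ) ≤ Fintype.card F - 1 := sub_nonneg.mpr (mod_cast Fintype.card_pos)
  calc _ ≤ √(∑ χ : MulChar F ℂ, ‖∑ x ∈ A, χ (u x)‖ ^ 2) *
        √(∑ χ : MulChar F ℂ, ‖∑ y ∈ B, χ (v y)‖ ^ 2) := Real.sum_mul_le_sqrt_mul_sqrt _ _ _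
    _ ≤ √((Fintype.card F - 1) * (m * #A)) * √((Fintype.card F - 1) * (n * #B)) := by
        gcongr
        · exact sum_norm_sq_sum_mulChar_comp_le hu
        · exact sum_norm_sq_sum_mulChar_comp_le hv
    _ = (Fintype.card F - 1) * √((m * #A) * (n * #B)) := by
        rw [Real.sqrt_mul hq, Real.sqrt_mul hq, mul_mul_mul_comm, Real.mul_self_sqrt hq,
          ← Real.sqrt_mul (by positivity)]

theorem card_sub_one_mul_sum_card_mul_mem_le [DecidableEq F] [Fintype (MulChar F ℂ)]
    {ι κ : Type*} (I : Finset ι) (J : Finset κ) {T : Finset F} (hT : 0 ∉ T) (u : ι → F)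
    (v : κ → F) :
    (Fintype.card F - 1 : ℝ) * ∑ j ∈ J, (#{i ∈ I | u i * v j ∈ T} : ℝ) ≤
      ∑ χ : MulChar F ℂ, ‖∑ t ∈ T, χ t‖ * ‖∑ i ∈ I, χ (u i)‖ * ‖∑ j ∈ J, χ (v j)‖ := by
  have hcount : (((Fintype.card F - 1) * ∑ j ∈ J, (#{i ∈ I | u i * v j ∈ T} : ℝ) : ℝ) : ℂ) =
      ∑ χ : MulChar F ℂ, conj (∑ t ∈ T, χ t) * (∑ i ∈ I, χ (u i)) * ∑ j ∈ J, χ (v j) := by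
    rw [← card_sub_one_mul_sum_card_mul_mem I J hT u v]
    simp only [Complex.ofReal_mul, Complex.ofReal_sub, Complex.ofReal_natCast, Complex.ofReal_one,
      Complex.ofReal_sum]
  calc _ ≤ ‖∑ χ : MulChar F ℂ, conj (∑ t ∈ T, χ t) * (∑ i ∈ I, χ (u i)) * ∑ j ∈ J, χ (v j)‖ := by
        rw [← hcount, Complex.norm_real]
        exact Real.le_norm_self _
    _ ≤ _ := (norm_sum_le _ _).trans_eq <| sum_congr rfl fun χ _ => by
        rw [norm_mul, norm_mul, RCLike.norm_conj]

theorem sum_card_mul_mem_le [DecidableEq F] {ι κ : Type*} {I : Finset ι} {J : Finset κ}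
    {T : Finset F} (hT : 0 ∉ T) {u : ι → F} {m : ℕ} (hu : FiberBound I u m) {v : κ → F} {E : ℝ}
    (hE : 0 ≤ E) (hv : ∀ χ : MulChar F ℂ, χ ≠ 1 → ‖∑ j ∈ J, χ (v j)‖ ≤ E) :
    ∑ j ∈ J, (#{i ∈ I | u i * v j ∈ T} : ℝ) ≤
      #T * #I * #J / (Fintype.card F - 1) + E * √(#T * (m * #I)) := by
  classical
  have := Fintype.ofFinite (MulChar F ℂ)
  have hq : (0 : ℝ) < Fintype.card F - 1 := sub_pos.mpr (mod_cast Fintype.one_lt_card)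
  set S : MulChar F ℂ → ℝ := fun χ => ‖∑ t ∈ T, χ t‖ * ‖∑ i ∈ I, χ (u i)‖
  have htrivial : S 1 * ‖∑ j ∈ J, (1 : MulChar F ℂ) (v j)‖ ≤ #T * #I * #J := by
    gcongr ?_ * ?_
    · gcongr ?_ * ?_ <;> exact norm_sum_mulChar_le_card _ _ _
    · exact norm_sum_mulChar_le_card _ _ _
  have hnontrivial : ∑ χ ∈ univ.erase 1, S χ * ‖∑ j ∈ J, χ (v j)‖ ≤
      E * ((Fintype.card F - 1) * √(#T * (m * #I))) := calc
    _ ≤ ∑ χ ∈ univ.erase 1, S χ * E := by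
        gcongr with χ hχ
        exact hv χ (ne_of_mem_erase hχ)
    _ ≤ ∑ χ, S χ * E :=
        sum_le_sum_of_subset_of_nonneg (erase_subset _ _) fun _ _ _ => by positivity
    _ = E * ∑ χ, S χ := by rw [← sum_mul, mul_comm]
    _ ≤ _ := by
        gcongr
        simpa using
          sum_norm_mul_norm_sum_mulChar_le (fiberBound_of_injective T Function.injective_id) hu
  refine le_of_mul_le_mul_left ?_ hq
  calc _ ≤ ∑ χ, S χ * ‖∑ j ∈ J, χ (v j)‖ := card_sub_one_mul_sum_card_mul_mem_le I J hT u v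
    _ = S 1 * ‖∑ j ∈ J, (1 : MulChar F ℂ) (v j)‖ +
          ∑ χ ∈ univ.erase 1, S χ * ‖∑ j ∈ J, χ (v j)‖ :=
        (add_sum_erase _ _ (mem_univ _)).symm
    _ ≤ #T * #I * #J + E * ((Fintype.card F - 1) * √(#T * (m * #I))) :=
        add_le_add htrivial hnontrivial
    _ = _ := by field_simp

end Fintype

end Characters

section NonzeroValues

variable {ι κ α : Type*} [Zero α] [DecidableEq α]

/-- The pairs `(x, f x y)` with `x ∈ A`, `y ∈ B` and `f x y ≠ 0`. Comparing their number with
the number of `(x, y)` bounds the collisions `f x y = f x y'`; the second components are values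
of `f`, and scaling the second component by `w` of the first gives a value of the `w`-shift. -/
def nonzeroValuePairs [DecidableEq ι] (f : ι → κ → α) (A : Finset ι) (B : Finset κ) :
    Finset (ι × α) :=
  {q ∈ A ×ˢ B | f q.1 q.2 ≠ 0}.image fun q => (q.1, f q.1 q.2)

theorem card_filter_ne_zero_sq_le_card_nonzeroValuePairs_mul [DecidableEq ι] (f : ι → κ → α)
    (A : Finset ι) (B : Finset κ) :
    #{q ∈ A ×ˢ B | f q.1 q.2 ≠ 0} ^ 2 ≤
      #(nonzeroValuePairs f A B) * ∑ y ∈ B, ∑ y' ∈ B, #{x ∈ A | f x y' = f x y} := by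
  set s := {q ∈ A ×ˢ B | f q.1 q.2 ≠ 0}
  refine (card_sq_le_card_image_mul_sum_card_fiber s fun q => (q.1, f q.1 q.2)).trans
    (Nat.mul_le_mul_left _ ?_)
  calc ∑ q ∈ s, #{r ∈ s | (r.1, f r.1 r.2) = (q.1, f q.1 q.2)}
      ≤ ∑ q ∈ s, #{y ∈ B | f q.1 y = f q.1 q.2} := by
        gcongr with q
        refine card_le_card_of_injOn Prod.snd (fun r hr => ?_) fun r hr r' hr' h => ?_
        · simp only [s, coe_filter, mem_filter, mem_product, Prod.mk.injEq,
            Set.mem_ofPred_eq] at hr ⊢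
          exact ⟨hr.1.1.2, hr.2.1 ▸ hr.2.2⟩
        · simp only [coe_filter, Set.mem_ofPred_eq, Prod.mk.injEq] at hr hr'
          exact Prod.ext (hr.2.1.trans hr'.2.1.symm) h
    _ ≤ ∑ q ∈ A ×ˢ B, #{y ∈ B | f q.1 y = f q.1 q.2} :=
        sum_le_sum_of_subset (filter_subset _ _)
    _ = ∑ y ∈ B, ∑ y' ∈ B, #{x ∈ A | f x y' = f x y} := by
        simp_rw [sum_product_right, card_filter]
        exact sum_congr rfl fun y _ => sum_comm

theorem card_mul_card_le_card_filter_ne_zero_add {f : ι → κ → α} {A : Finset ι} {B : Finset κ}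
    {l : ℕ} (hf : ∀ x ∈ A, #{y ∈ B | f x y = 0} ≤ l) :
    #A * #B ≤ #{q ∈ A ×ˢ B | f q.1 q.2 ≠ 0} + #A * l := by
  have hzeros : #{q ∈ A ×ˢ B | f q.1 q.2 = 0} ≤ #A * l := by
    simp_rw [card_filter, sum_product, ← card_filter]
    exact sum_le_card_nsmul A _ l hf
  rw [← card_product, ← card_filter_add_card_filter_not (s := A ×ˢ B) fun q => f q.1 q.2 = 0,
    add_comm]
  exact Nat.add_le_add_left hzeros _

end NonzeroValues

theorem card_nonzeroValuePairs_sq_le {ι κ F : Type*} [DecidableEq ι] [MulZeroClass F]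
    [NoZeroDivisors F] [DecidableEq F] (f : ι → κ → F) {w : ι → F} {A : Finset ι}
    (hw : ∀ x ∈ A, w x ≠ 0) (B : Finset κ) :
    #(nonzeroValuePairs f A B) ^ 2 ≤ #(image₂ f A B) * ∑ q ∈ A ×ˢ B,
      #{x ∈ A | w x * f q.1 q.2 ∈ (image₂ (fun x y => w x * f x y) A B).erase 0} := by
  set V := nonzeroValuePairs f A B with hV
  set T := (image₂ (fun x y => w x * f x y) A B).erase 0
  have hmem {v : ι × F} (hv : v ∈ V) :
      v.1 ∈ A ∧ v.2 ∈ image₂ f A B ∧ w v.1 * v.2 ∈ T := by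
    simp only [hV, nonzeroValuePairs, mem_image, mem_filter, mem_product] at hv
    obtain ⟨q, ⟨⟨hx, hy⟩, h0⟩, rfl⟩ := hv
    exact ⟨hx, mem_image₂_of_mem hx hy,
      mem_erase.mpr ⟨mul_ne_zero (hw _ hx) h0, mem_image₂_of_mem hx hy⟩⟩
  refine (card_sq_le_card_image_mul_sum_card_fiber V Prod.snd).trans (Nat.mul_le_mul ?_ ?_)
  · exact card_le_card (image_subset_iff.mpr fun v hv => (hmem hv).2.1)
  · calc ∑ v ∈ V, #{v' ∈ V | v'.2 = v.2} ≤ ∑ v ∈ V, #{x ∈ A | w x * v.2 ∈ T} := by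
          gcongr with v
          refine card_le_card_of_injOn Prod.fst (fun v' hv' => ?_) fun v' hv' v'' hv'' h => ?_
          · obtain ⟨hv'V, hv'⟩ := mem_filter.mp hv'
            exact mem_filter.mpr ⟨(hmem hv'V).1, hv' ▸ (hmem hv'V).2.2⟩
          · exact Prod.ext h <| (mem_filter.mp hv').2.trans (mem_filter.mp hv'').2.symm
      _ ≤ ∑ q ∈ A ×ˢ B with f q.1 q.2 ≠ 0, #{x ∈ A | w x * f q.1 q.2 ∈ T} :=
          sum_image_le_of_nonneg fun _ _ => Nat.zero_le _
      _ ≤ ∑ q ∈ A ×ˢ B, #{x ∈ A | w x * f q.1 q.2 ∈ T} :=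
          sum_le_sum_of_subset (filter_subset _ _)

section Exponents

theorem mul_rpow_le_of_rpow_le_mul_pow {a M C κ s t : ℝ} {n : ℕ} (hn : n ≠ 0) (hκ : 0 ≤ κ)
    (hκ₁ : κ ≤ 1) (hκC : κ * C ≤ 1) (ha : 1 ≤ a) (hM : 0 ≤ M) (hst : t * n ≤ s)
    (h : a ^ s ≤ C * M ^ n) : κ * a ^ t ≤ M := by
  have ha₀ : 0 ≤ a := zero_le_one.trans ha
  refine le_of_pow_le_pow_left₀ hn hM ?_
  calc (κ * a ^ t) ^ n = κ ^ n * a ^ (t * n) := by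
        rw [mul_pow, Real.rpow_mul_natCast ha₀]
    _ ≤ κ * (C * M ^ n) := by
        gcongr
        · exact pow_le_of_le_one hκ hκ₁ hn
        · exact (Real.rpow_le_rpow_of_exponent_le ha hst).trans h
    _ ≤ M ^ n := by
        rw [← mul_assoc]
        exact mul_le_of_le_one_left (by positivity) hκC

theorem rpow_one_add_inv_le_of_mul_le {a c q α X : ℝ} (hα : 0 < α) (hc : 0 < c) (ha : 0 < a)
    (hq : 0 ≤ q) (haq : a ≤ c * q ^ α) (hX : a * q ≤ X) : a ^ (1 + α⁻¹) ≤ c ^ α⁻¹ * X := by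
  have hle : a ^ α⁻¹ ≤ c ^ α⁻¹ * q := calc
    _ ≤ (c * q ^ α) ^ α⁻¹ := by gcongr
    _ = c ^ α⁻¹ * q := by
      rw [Real.mul_rpow hc.le (by positivity), Real.rpow_rpow_inv hq hα.ne']
  calc a ^ (1 + α⁻¹) = a * a ^ α⁻¹ := by rw [Real.rpow_add ha, Real.rpow_one]
    _ ≤ a * (c ^ α⁻¹ * q) := by gcongr
    _ = c ^ α⁻¹ * (a * q) := mul_left_comm _ _ _
    _ ≤ c ^ α⁻¹ * X := by gcongr

theorem rpow_sub_inv_le_of_pow_le_mul {a c q α X : ℝ} {n : ℕ} (hα : 0 < α) (hc : 0 < c)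
    (ha : 0 < a) (hq : 0 ≤ q) (hqa : c * q ^ α ≤ a) (hX₀ : 0 ≤ X) (hX : a ^ n ≤ q * X) :
    a ^ (n - α⁻¹) ≤ X / c ^ α⁻¹ := by
  have hle : c ^ α⁻¹ * q ≤ a ^ α⁻¹ := calc
    _ = (c * q ^ α) ^ α⁻¹ := by
      rw [Real.mul_rpow hc.le (by positivity), Real.rpow_rpow_inv hq hα.ne']
    _ ≤ a ^ α⁻¹ := by gcongr
  rw [Real.rpow_sub ha, Real.rpow_natCast, div_le_div_iff₀ (by positivity) (by positivity)]
  calc a ^ n * c ^ α⁻¹ ≤ q * X * c ^ α⁻¹ := by gcongr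
    _ = X * (c ^ α⁻¹ * q) := by ring
    _ ≤ X * a ^ α⁻¹ := by gcongr

theorem exists_mul_rpow_one_add_le {α c₁ c₂ C₀ C₁ C₂ : ℝ} (hα₁ : 1 / 2 < α) (hα₂ : α < 1)
    (hc₁ : 0 < c₁) (hc₂ : 0 < c₂) (hC₀ : 0 ≤ C₀) (hC₁ : 0 ≤ C₁) (hC₂ : 0 ≤ C₂) :
    ∃ Δ > (0 : ℝ), ∃ κ > 0, ∀ q a M : ℝ, 0 ≤ q → 1 ≤ a → 1 ≤ M → c₁ * q ^ α ≤ a →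
      a ≤ c₂ * q ^ α → (a ≤ C₀ ∨ a * q ≤ C₁ * M ^ 2 ∨ a ^ 5 ≤ q * (C₂ * M ^ 3)) →
      κ * a ^ (1 + Δ) ≤ M := by
  have hα : 0 < α := one_half_pos.trans hα₁
  have hα_inv₁ : 1 < α⁻¹ := (one_lt_inv₀ hα).mpr hα₂
  have hα_inv₂ : α⁻¹ < 2 := by rwa [inv_lt_comm₀ hα two_pos, ← one_div]
  -- With `a ≍ q ^ α` the last two alternatives read `a ^ (1 + α⁻¹) ≪ M ^ 2` and
  -- `a ^ (5 - α⁻¹) ≪ M ^ 3`; these exponents exceed `2` and `3` by `α⁻¹ - 1` and `2 - α⁻¹`.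
  set Δ := min ((α⁻¹ - 1) / 2) ((2 - α⁻¹) / 3)
  have hΔ₁ : Δ ≤ (α⁻¹ - 1) / 2 := min_le_left _ _
  have hΔ₂ : Δ ≤ (2 - α⁻¹) / 3 := min_le_right _ _
  have hΔ : 0 < Δ := lt_min (by linarith) (by linarith)
  have hK₀ : 0 ≤ C₀ ^ (1 + Δ) := by positivity
  have hK₁ : 0 ≤ c₂ ^ α⁻¹ * C₁ := by positivity
  have hK₂ : 0 ≤ C₂ / c₁ ^ α⁻¹ := by positivity
  set K := 1 + C₀ ^ (1 + Δ) + c₂ ^ α⁻¹ * C₁ + C₂ / c₁ ^ α⁻¹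
  have hK : 0 < K := by positivity
  have hκ {C : ℝ} (hC : C ≤ K) : K⁻¹ * C ≤ 1 := inv_mul_le_one_of_le₀ hC hK.le
  have hκ₁ : K⁻¹ ≤ 1 := inv_le_one_of_one_le₀ (by linarith)
  refine ⟨Δ, hΔ, K⁻¹, inv_pos.mpr hK, fun q a M hq ha hM hqa haq h => ?_⟩
  have ha₀ : 0 < a := zero_lt_one.trans_le ha
  rcases h with h | h | h
  · calc K⁻¹ * a ^ (1 + Δ) ≤ K⁻¹ * C₀ ^ (1 + Δ) := by gcongr
      _ ≤ 1 := hκ (by linarith)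
      _ ≤ M := hM
  · refine mul_rpow_le_of_rpow_le_mul_pow (C := c₂ ^ α⁻¹ * C₁) (s := 1 + α⁻¹) two_ne_zero
      (by positivity) hκ₁ (hκ (by linarith)) ha (by positivity) (by push_cast; linarith) ?_
    exact (rpow_one_add_inv_le_of_mul_le hα hc₂ ha₀ hq haq h).trans_eq (mul_assoc _ _ _).symm
  · refine mul_rpow_le_of_rpow_le_mul_pow (C := C₂ / c₁ ^ α⁻¹) (s := (5 : ℕ) - α⁻¹)
      three_ne_zero (by positivity) hκ₁ (hκ (by linarith)) ha (by positivity)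
      (by push_cast; linarith) ?_
    exact (rpow_sub_inv_le_of_pow_le_mul hα hc₁ ha₀ hq hqa (by positivity) h).trans_eq
      (mul_div_right_comm _ _ _)

theorem mul_le_or_pow_five_le {a k m q M : ℝ} (ha : 0 < a) (hk : 0 ≤ k) (hm : 0 ≤ m)
    (hq : 2 ≤ q) (hM : 0 ≤ M)
    (h : a ^ 4 ≤ 64 * k ^ 2 * M *
      (M * a ^ 3 / (q - 1) + √((k * a) * (q * (k * a))) * √(M * (m * a)))) :
    a * q ≤ 256 * k ^ 2 * M ^ 2 ∨ a ^ 5 ≤ q * ((128 * k ^ 3) ^ 2 * m * M ^ 3) := by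
  have hq₁ : 0 < q - 1 := by linarith
  rw [mul_add] at h
  rcases le_total (64 * k ^ 2 * M * (√((k * a) * (q * (k * a))) * √(M * (m * a))))
    (64 * k ^ 2 * M * (M * a ^ 3 / (q - 1))) with hle | hle
  · left
    have hmain : a ^ 4 ≤ 128 * k ^ 2 * M ^ 2 * a ^ 3 / (q - 1) := by
      refine (h.trans (add_le_add_right hle _)).trans_eq ?_
      ring
    rw [le_div_iff₀ hq₁] at hmain
    have hsub : a * (q - 1) ≤ 128 * k ^ 2 * M ^ 2 :=
      le_of_mul_le_mul_right (by linarith) (pow_pos ha 3)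
    nlinarith
  · right
    have hmain : a ^ 4 ≤ 128 * k ^ 2 * M * (√((k * a) * (q * (k * a))) * √(M * (m * a))) := by
      linarith
    refine le_of_mul_le_mul_right ?_ (pow_pos ha 3)
    calc a ^ 5 * a ^ 3 = (a ^ 4) ^ 2 := by ring
      _ ≤ (128 * k ^ 2 * M * (√((k * a) * (q * (k * a))) * √(M * (m * a)))) ^ 2 := by gcongr
      _ = q * ((128 * k ^ 3) ^ 2 * m * M ^ 3) * a ^ 3 := by
          rw [mul_pow, mul_pow √_, Real.sq_sqrt (by positivity), Real.sq_sqrt (by positivity)]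
          ring

end Exponents

section TwistedSum

variable {ι κ F : Type*} [Field F]

/-- The twisted sum `g(x) h(y) (φ(x) + ψ(y))`; with `φ` and `ψ` both the `k`-th power map it is
the function `f` of the theorem. -/
def twistedSum (g φ : ι → F) (h ψ : κ → F) (x : ι) (y : κ) : F :=
  g x * h y * (φ x + ψ y)

variable [DecidableEq F] {g φ w : ι → F} {h ψ : κ → F} {k l m : ℕ} {A : Finset ι} {B : Finset κ}

theorem card_filter_twistedSum_eq_zero_le (hψ : FiberBound B ψ l) {x : ι} (hg : g x ≠ 0)
    (hh : ∀ y ∈ B, h y ≠ 0) : #{y ∈ B | twistedSum g φ h ψ x y = 0} ≤ l := by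
  refine (card_le_card fun y hy => ?_).trans (hψ (-φ x))
  obtain ⟨hyB, hy⟩ := mem_filter.mp hy
  have hsum : φ x + ψ y = 0 := (mul_eq_zero.mp hy).resolve_left (mul_ne_zero hg (hh y hyB))
  exact mem_filter.mpr ⟨hyB, (neg_eq_of_add_eq_zero_right hsum).symm⟩

theorem card_filter_twistedSum_eq_twistedSum_le (hφ : FiberBound A φ k) (hg : ∀ x ∈ A, g x ≠ 0)
    {y y' : κ} (hh : h y ≠ 0) (hψ : ψ y' ≠ ψ y) :
    #{x ∈ A | twistedSum g φ h ψ x y' = twistedSum g φ h ψ x y} ≤ k := by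
  refine (card_le_card fun x hx => ?_).trans (hφ ((h y * ψ y - h y' * ψ y') / (h y' - h y)))
  obtain ⟨hxA, hx⟩ := mem_filter.mp hx
  have heq : h y' * (φ x + ψ y') = h y * (φ x + ψ y) := by
    simpa only [twistedSum, mul_assoc, mul_right_inj' (hg x hxA)] using hx
  have hne : h y' ≠ h y := by
    intro hyy'
    rw [hyy', mul_right_inj' hh, add_right_inj] at heq
    exact hψ heq
  refine mem_filter.mpr ⟨hxA, ?_⟩
  rw [eq_div_iff (sub_ne_zero.mpr hne)]
  linear_combination heq

theorem sum_card_filter_twistedSum_eq_twistedSum_le (hφ : FiberBound A φ k)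
    (hψ : FiberBound B ψ l) (hg : ∀ x ∈ A, g x ≠ 0) (hh : ∀ y ∈ B, h y ≠ 0) :
    ∑ y ∈ B, ∑ y' ∈ B, #{x ∈ A | twistedSum g φ h ψ x y' = twistedSum g φ h ψ x y} ≤
      #B * (k * #B + l * #A) := by
  refine sum_le_card_nsmul B _ _ fun y hy => ?_
  calc _ ≤ ∑ y' ∈ B, (k + if ψ y' = ψ y then #A else 0) := by
        gcongr with y'
        split_ifs with hyy'
        · exact (card_filter_le _ _).trans (Nat.le_add_left _ _)
        · exact card_filter_twistedSum_eq_twistedSum_le hφ hg (hh y hy) hyy'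
    _ = k * #B + #{y' ∈ B | ψ y' = ψ y} * #A := by
        rw [sum_add_distrib, ← sum_filter, sum_const, sum_const, smul_eq_mul, smul_eq_mul,
          mul_comm k]
    _ ≤ k * #B + l * #A := by
        gcongr
        exact hψ (ψ y)

theorem card_sq_mul_card_le_card_nonzeroValuePairs_twistedSum_mul [DecidableEq ι]
    (hφ : FiberBound A φ k) (hψ : FiberBound B ψ l) (hg : ∀ x ∈ A, g x ≠ 0)
    (hh : ∀ y ∈ B, h y ≠ 0) (hl : 2 * l ≤ #B) :
    #A ^ 2 * #B ≤
      4 * #(nonzeroValuePairs (twistedSum g φ h ψ) A B) * (k * #B + l * #A) := by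
  rcases B.eq_empty_or_nonempty with rfl | hB
  · simp
  set s := {q ∈ A ×ˢ B | twistedSum g φ h ψ q.1 q.2 ≠ 0}
  have hsupport : #A * #B ≤ 2 * #s := by
    have := card_mul_card_le_card_filter_ne_zero_add fun x hx =>
      card_filter_twistedSum_eq_zero_le (φ := φ) hψ (hg x hx) hh
    nlinarith
  refine le_of_mul_le_mul_right ?_ hB.card_pos
  calc #A ^ 2 * #B * #B = (#A * #B) ^ 2 := by ring
    _ ≤ (2 * #s) ^ 2 := by gcongr
    _ = 4 * #s ^ 2 := by ring
    _ ≤ 4 * (#(nonzeroValuePairs (twistedSum g φ h ψ) A B) * (#B * (k * #B + l * #A))) := by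
        gcongr
        exact (card_filter_ne_zero_sq_le_card_nonzeroValuePairs_mul _ A B).trans
          (Nat.mul_le_mul_left _ (sum_card_filter_twistedSum_eq_twistedSum_le hφ hψ hg hh))
    _ = _ := by ring

variable [Fintype F]

theorem norm_sum_mulChar_twistedSum_le (hφ : FiberBound A φ k) (hψ : FiberBound B ψ l)
    {χ : MulChar F ℂ} (hχ : χ ≠ 1) :
    ‖∑ q ∈ A ×ˢ B, χ (twistedSum g φ h ψ q.1 q.2)‖ ≤
      √((k * #A) * (Fintype.card F * (l * #B))) := by
  calc _ = ‖∑ x ∈ A, χ (g x) * ∑ y ∈ B, χ (h y) * χ (φ x + ψ y)‖ := by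
        simp_rw [sum_product, twistedSum, map_mul, mul_sum, mul_assoc]
    _ ≤ √((k * ∑ x ∈ A, ‖χ (g x)‖ ^ 2) * (Fintype.card F * (l * ∑ y ∈ B, ‖χ (h y)‖ ^ 2))) :=
        norm_sum_mul_mulChar_comp_add_comp_le hφ hψ hχ _ _
    _ ≤ _ := by gcongr <;> exact sum_norm_sq_mulChar_comp_le_card χ _ _

theorem sq_card_sq_mul_card_le_of_card_image₂_twistedSum_le (hφ : FiberBound A φ k)
    (hψ : FiberBound B ψ l) (hw : FiberBound A w m) (hg : ∀ x ∈ A, g x ≠ 0)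
    (hh : ∀ y ∈ B, h y ≠ 0) (hw₀ : ∀ x ∈ A, w x ≠ 0) (hl : 2 * l ≤ #B) {M : ℝ}
    (hS : #(image₂ (twistedSum g φ h ψ) A B) ≤ M)
    (hT : #(image₂ (fun x y => w x * twistedSum g φ h ψ x y) A B) ≤ M) :
    ((#A : ℝ) ^ 2 * #B) ^ 2 ≤ 16 * (k * #B + l * #A : ℝ) ^ 2 * (M *
      (M * #A * (#A * #B) / (Fintype.card F - 1) +
        √((k * #A) * (Fintype.card F * (l * #B))) * √(M * (m * #A)))) := by
  classical
  set V := nonzeroValuePairs (twistedSum g φ h ψ) A B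
  set T := (image₂ (fun x y => w x * twistedSum g φ h ψ x y) A B).erase 0
  have hTM : (#T : ℝ) ≤ M := le_trans (mod_cast card_erase_le) hT
  have hq : (0 : ℝ) ≤ Fintype.card F - 1 := sub_nonneg.mpr (mod_cast Fintype.card_pos)
  have hM : 0 ≤ M := (Nat.cast_nonneg _).trans hS
  have hlower : (#A : ℝ) ^ 2 * #B ≤ 4 * #V * (k * #B + l * #A) :=
    mod_cast card_sq_mul_card_le_card_nonzeroValuePairs_twistedSum_mul hφ hψ hg hh hl
  have hupper : (#V : ℝ) ^ 2 ≤ #(image₂ (twistedSum g φ h ψ) A B) *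
      ∑ q ∈ A ×ˢ B, (#{x ∈ A | w x * twistedSum g φ h ψ q.1 q.2 ∈ T} : ℝ) :=
    mod_cast card_nonzeroValuePairs_sq_le (twistedSum g φ h ψ) hw₀ B
  have hmixing := sum_card_mul_mem_le (T := T) (notMem_erase 0 _) hw (Real.sqrt_nonneg _)
    fun χ hχ => norm_sum_mulChar_twistedSum_le (g := g) (h := h) hφ hψ hχ
  calc ((#A : ℝ) ^ 2 * #B) ^ 2 ≤ (4 * #V * (k * #B + l * #A) : ℝ) ^ 2 := by gcongr
    _ = 16 * (k * #B + l * #A : ℝ) ^ 2 * #V ^ 2 := by ring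
    _ ≤ _ := by
        gcongr
        refine hupper.trans (mul_le_mul hS (hmixing.trans ?_) (by positivity) hM)
        rw [card_product, Nat.cast_mul]
        gcongr

theorem card_image₂_twistedSum_trichotomy {A : Finset ι} {φ ψ g h w : ι → F}
    (hφ : FiberBound A φ k) (hψ : FiberBound A ψ k) (hw : FiberBound A w m)
    (hg : ∀ x ∈ A, g x ≠ 0) (hh : ∀ x ∈ A, h x ≠ 0) (hw₀ : ∀ x ∈ A, w x ≠ 0) {M : ℝ}
    (hS : #(image₂ (twistedSum g φ h ψ) A A) ≤ M)
    (hT : #(image₂ (fun x y => w x * twistedSum g φ h ψ x y) A A) ≤ M) :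
    (#A : ℝ) ≤ 2 * k ∨ #A * Fintype.card F ≤ 256 * k ^ 2 * M ^ 2 ∨
      (#A : ℝ) ^ 5 ≤ Fintype.card F * ((128 * k ^ 3) ^ 2 * m * M ^ 3) := by
  refine or_iff_not_imp_left.mpr fun hlarge => ?_
  have hlarge : 2 * k < #A := by exact_mod_cast not_le.mp hlarge
  have ha : (0 : ℝ) < #A := mod_cast (Nat.zero_le _).trans_lt hlarge
  have hq : (2 : ℝ) ≤ Fintype.card F := mod_cast Fintype.one_lt_card
  have hpow := sq_card_sq_mul_card_le_of_card_image₂_twistedSum_le hφ hψ hw hg hh hw₀ hlarge.le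
    hS hT
  refine mul_le_or_pow_five_le ha k.cast_nonneg m.cast_nonneg hq
    ((Nat.cast_nonneg _).trans hS) ?_
  refine le_of_mul_le_mul_right ?_ (pow_pos ha 2)
  refine (Eq.le ?_).trans (hpow.trans_eq ?_) <;> ring

end TwistedSum

theorem stmt_13_general (k m : ℕ) {α c₁ c₂ : ℝ} (hα₁ : 1 / 2 < α) (hα₂ : α < 1) (hc₁ : 0 < c₁)
    (hc₂ : 0 < c₂) :
    ∃ Δ > (0 : ℝ), ∃ κ > 0, ∀ (F : Type*) [Field F] [Fintype F] [DecidableEq F] (ι : Type*)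
      (A : Finset ι) (φ ψ g h w : ι → F), FiberBound A φ k → FiberBound A ψ k →
      FiberBound A w m → (∀ x ∈ A, g x ≠ 0) → (∀ x ∈ A, h x ≠ 0) → (∀ x ∈ A, w x ≠ 0) →
      c₁ * (Fintype.card F : ℝ) ^ α < #A → #A < c₂ * (Fintype.card F : ℝ) ^ α →
      κ * (#A : ℝ) ^ (1 + Δ) ≤ max (#(image₂ (twistedSum g φ h ψ) A A) : ℝ)
        #(image₂ (fun x y => w x * twistedSum g φ h ψ x y) A A) := by
  obtain ⟨Δ, hΔ, κ, hκ, hgrowth⟩ := exists_mul_rpow_one_add_le (C₀ := 2 * k)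
    (C₁ := 256 * k ^ 2) (C₂ := (128 * k ^ 3) ^ 2 * m) hα₁ hα₂ hc₁ hc₂ (by positivity)
    (by positivity) (by positivity)
  refine ⟨Δ, hΔ, κ, hκ, fun F _ _ _ ι A φ ψ g h w hφ hψ hw hg hh hw₀ hlow hhigh => ?_⟩
  have hA : 0 < #A := Nat.cast_pos.mp (hlow.trans_le' (by positivity))
  have himage : (1 : ℝ) ≤ #(image₂ (twistedSum g φ h ψ) A A) :=
    mod_cast ((card_pos.mp hA).image₂ (card_pos.mp hA)).card_pos
  exact hgrowth _ _ _ (Nat.cast_nonneg _) (mod_cast hA) (himage.trans (le_max_left _ _)) hlow.le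
    hhigh.le
    (card_image₂_twistedSum_trichotomy hφ hψ hw hg hh hw₀ (le_max_left _ _)
      (le_max_right _ _))

end ShiftedGrowth

/-- Theorem 5: for fixed `k, m, m'`, `1/2 < α < 1` and `0 < c₁ < c₂` there are
`Δ > 0` and `κ > 0` such that for `f(x,y) = g(x)h(y)(x^k+y^k)` (with `g, h` as in
Theorem 3) and any `w` with `μ(w) ≤ m'`, every `A ⊆ G` with `c₁·p^α < |A| < c₂·p^α`
satisfies `max(|f(A,A)|, |P_w(f)(A,A)|) ≥ κ·|A|^{1+Δ}`, where
`P_w(f)(x,y) = w(x)·f(x,y)`. -/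
theorem stmt_13 (k m m' : ℕ) (hk : 0 < k) (hm : 0 < m) (hm' : 0 < m')
    (α c₁ c₂ : ℝ) (hα₁ : 1 / 2 < α) (hα₂ : α < 1) (hc₁ : 0 < c₁) (hc₁₂ : c₁ < c₂) :
    ∃ Δ : ℝ, 0 < Δ ∧ ∃ κ : ℝ, 0 < κ ∧ ∀ (p : ℕ), p.Prime →
    ∀ G : Finset (ZMod p), (0 : ZMod p) ∉ G → (1 : ZMod p) ∈ G →
      (∀ x ∈ G, ∀ y ∈ G, x * y ∈ G) → (∀ x ∈ G, x⁻¹ ∈ G) →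
    ∀ g h : ZMod p → ZMod p, (∀ x ∈ G, g x ≠ 0) → (∀ x ∈ G, h x ≠ 0) →
      (∀ z ∈ G, (G.image fun x => g (x * z) * (g x)⁻¹).card ≤ m) →
      (∀ z ∈ G, (G.image fun x => h (x * z) * (h x)⁻¹).card ≤ m) →
      (∀ u ∈ G, ∀ t : ZMod p, (G.filter fun x => g x * h (u * x) * x = t).card ≤ m) →
    ∀ w : ZMod p → ZMod p, (∀ x ∈ G, w x ≠ 0) →
      (∀ t : ZMod p, (G.filter fun x => w x = t).card ≤ m') →
    ∀ A : Finset (ZMod p), A ⊆ G →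
      c₁ * (p : ℝ) ^ α < (A.card : ℝ) → (A.card : ℝ) < c₂ * (p : ℝ) ^ α →
      max ((Finset.image₂ (fun x y => g x * h y * (x ^ k + y ^ k)) A A).card : ℝ)
          ((Finset.image₂ (fun x y => w x * (g x * h y * (x ^ k + y ^ k))) A A).card : ℝ) ≥
        κ * (A.card : ℝ) ^ ((1 : ℝ) + Δ) := by
  obtain ⟨Δ, hΔ, κ, hκ, hgrowth⟩ := stmt_13_general k m' hα₁ hα₂ hc₁ (hc₁.trans hc₁₂)
  refine ⟨Δ, hΔ, κ, hκ, fun p hp G _ _ _ _ g h hg hh _ _ _ w hw hwm A hA hlow hhigh => ?_⟩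
  have := Fact.mk hp
  have hpow := fiberBound_pow A hk
  exact hgrowth (ZMod p) (ZMod p) A _ _ g h w hpow hpow (FiberBound.mono hwm hA)
    (fun x hx => hg x (hA hx)) (fun x hx => hh x (hA hx)) (fun x hx => hw x (hA hx))
    (by rwa [ZMod.card]) (by rwa [ZMod.card])
end

section
/- Fix positive integers m and m', a real α with 1/2 < α < 1, and reals 0 < c₁ < c₂. Then there exist Δ > 0 and κ > 0 (depending only on m, m', α, c₁, c₂) with the following property. Let p be a prime, G a subgroup of 𝔽_p^*, and g, h : G → 𝔽_p^* functions with μ(g) ≤ m. Define f(x,y) = g(x)(h(x) + y). Let w : G → 𝔽_p be a function with μ(w) ≤ m', and let S_w(f)(x,y) = w(x) + f(x,y). Then for every set A ⊆ G with c₁·p^α < |A| < c₂·p^α one has max( |f(A,A)|, |S_w(f)(A,A)| ) ≥ κ · |A|^{1+Δ}. -/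
open Pointwise

/-!
By Cauchy–Schwarz, `g x * (h x + y) = g z * (h z + t)` has at least `|A|⁴ / |f(A,A)|` solutions in
`A`. In each of them `x`, `y`, `z` determine `t`, and `w z + g x * (h x + y)` equals
`w z + g z * (h z + t)`, so it lies in `S = S_w(f)(A,A)`: the solution is an incidence between the
point `(y, w z)` and one of the `|A||S|` lines `g x * Y₁ + Y₂ = s - g x * h x`. These points and
lines have multiplicities at most `m'` and `m`, and a weighted form of Vinh's point–line incidence
bound over a field with `q` elements keeps the number of incidences within
`√(m m' q |A|³|S|)` of `|A|³|S| / q`. Hence, for `|A|` of order `q ^ α`, `|f(A,A)||S|` is at least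
of order `q|A|` or `|f(A,A)|²|S|` is at least of order `|A|⁵ / q`; the first means growth because
`α < 1`, the second because `α > 1/2`.
-/

section

open Finset

section Collisions

variable {ι β : Type*} [DecidableEq β]

/-- The second moment of `φ` on `s`: the number of ordered pairs of elements of `s`, diagonal
included, on which `φ` takes the same value. For `φ` a sum of two coordinates this is the additive
energy. -/
def collisionCount (s : Finset ι) (φ : ι → β) : ℕ :=
  #{v ∈ s ×ˢ s | φ v.1 = φ v.2}

variable {s : Finset ι} {t : Finset β} {φ : ι → β}

lemma sum_sq_card_fiber (hφ : ∀ x ∈ s, φ x ∈ t) :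
    ∑ b ∈ t, #{x ∈ s | φ x = b} ^ 2 = collisionCount s φ := by
  have hmaps : ∀ v ∈ {v ∈ s ×ˢ s | φ v.1 = φ v.2}, φ v.1 ∈ t := fun v hv ↦
    hφ _ (mem_product.1 (mem_filter.1 hv).1).1
  rw [collisionCount, card_eq_sum_card_fiberwise hmaps]
  refine sum_congr rfl fun b _ ↦ ?_
  rw [sq, ← card_product]
  congr 1
  ext v
  simp only [mem_product, mem_filter]
  grind

lemma card_sq_le_card_mul_collisionCount (hφ : ∀ x ∈ s, φ x ∈ t) :
    #s ^ 2 ≤ #t * collisionCount s φ := by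
  rw [card_eq_sum_card_fiberwise hφ, ← sum_sq_card_fiber hφ]
  exact sq_sum_le_card_mul_sum_sq

lemma collisionCount_le_mul_card {m : ℕ} (hφ : ∀ b, #{x ∈ s | φ x = b} ≤ m) :
    collisionCount s φ ≤ m * #s := by
  have hmaps : ∀ x ∈ s, φ x ∈ s.image φ := fun x ↦ mem_image_of_mem φ
  rw [← sum_sq_card_fiber hmaps, card_eq_sum_card_fiberwise hmaps, mul_sum]
  exact sum_le_sum fun b _ ↦ by rw [sq]; exact Nat.mul_le_mul_right _ (hφ b)

lemma card_filter_prodMk_eq_le {γ : Type*} [DecidableEq γ] {r : Finset γ} {m : ℕ}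
    (hφ : ∀ b, #{x ∈ s | φ x = b} ≤ m) (u : γ × β) :
    #{v ∈ r ×ˢ s | (v.1, φ v.2) = u} ≤ m := by
  refine (card_le_card_of_injOn Prod.snd ?_ ?_).trans (hφ u.2)
  · intro v hv
    simp only [coe_filter, mem_product, Set.mem_ofPred_eq] at hv ⊢
    exact ⟨hv.1.2, congrArg Prod.snd hv.2⟩
  · intro v hv v' hv' hsnd
    simp only [coe_filter, mem_product, Set.mem_ofPred_eq] at hv hv'
    exact Prod.ext (congrArg (fun u : γ × β ↦ u.1) (hv.2.trans hv'.2.symm)) hsnd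

lemma card_filter_prodMk_sub_eq_le {γ : Type*} [AddGroup γ] [DecidableEq γ] {r : Finset γ}
    {k : ι → γ} {m : ℕ} (hφ : ∀ b, #{x ∈ s | φ x = b} ≤ m) (u : β × γ) :
    #{v ∈ s ×ˢ r | (φ v.1, v.2 - k v.1) = u} ≤ m := by
  refine (card_le_card_of_injOn Prod.fst ?_ ?_).trans (hφ u.1)
  · intro v hv
    simp only [coe_filter, mem_product, Set.mem_ofPred_eq] at hv ⊢
    exact ⟨hv.1.1, congrArg Prod.fst hv.2⟩
  · intro v hv v' hv' hfst
    simp only [coe_filter, mem_product, Set.mem_ofPred_eq] at hv hv'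
    have hsnd := congrArg (fun u : β × γ ↦ u.2) (hv.2.trans hv'.2.symm)
    simp only [hfst, sub_left_inj] at hsnd
    exact Prod.ext hfst hsnd

lemma sum_sq_card_fiber_sub_average [Fintype β] [Nonempty β] (s : Finset ι) (φ : ι → β) :
    ∑ b, (#{x ∈ s | φ x = b} - (#s : ℝ) / Fintype.card β) ^ 2 =
      collisionCount s φ - (#s : ℝ) ^ 2 / Fintype.card β := by
  have hmoment₁ : ∑ b, (#{x ∈ s | φ x = b} : ℝ) = #s := by
    exact_mod_cast (card_eq_sum_card_fiberwise fun x _ ↦ mem_coe.2 (mem_univ (φ x))).symm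
  have hmoment₂ : ∑ b, (#{x ∈ s | φ x = b} : ℝ) ^ 2 = collisionCount s φ := by
    exact_mod_cast sum_sq_card_fiber fun x _ ↦ mem_univ (φ x)
  simp only [sub_sq, sum_add_distrib, sum_sub_distrib, ← sum_mul, ← mul_sum, hmoment₁, hmoment₂,
    sum_const, card_univ, nsmul_eq_mul]
  field

lemma sum_comp_le_mul_sum_s14 [Fintype β] {f : β → ℝ} (hf : ∀ b, 0 ≤ f b) {m : ℕ}
    (hφ : ∀ b, #{x ∈ s | φ x = b} ≤ m) : ∑ x ∈ s, f (φ x) ≤ m * ∑ b, f b := by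
  rw [← sum_fiberwise_of_maps_to' (fun x _ ↦ mem_univ (φ x)) f, mul_sum]
  refine sum_le_sum fun b _ ↦ ?_
  rw [sum_const, nsmul_eq_mul]
  exact mul_le_mul_of_nonneg_right (mod_cast hφ b) (hf b)

end Collisions

section Incidences

variable {F : Type*} [Field F] [DecidableEq F] {ι κ : Type*}

/-- The number of incidences between the points `p i`, `i ∈ P`, and the lines `ℓ j`, `j ∈ T`, of the
affine plane over `F`, both counted with multiplicity. The pair `ℓ j = (a, c)` encodes the line
`a * x + y = c`, so its slope is `-a`. -/
def incidenceCount (P : Finset ι) (p : ι → F × F) (T : Finset κ) (ℓ : κ → F × F) : ℕ :=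
  ∑ j ∈ T, #{i ∈ P | (ℓ j).1 * (p i).1 + (p i).2 = (ℓ j).2}

variable [Fintype F]

lemma card_common_slope_le_one {u v : F × F} (huv : u ≠ v) :
    #{a : F | a * u.1 + u.2 = a * v.1 + v.2} ≤ 1 := by
  refine card_le_one.2 fun a ha b hb ↦ ?_
  simp only [mem_filter, mem_univ, true_and] at ha hb
  have hmul : (a - b) * (u.1 - v.1) = 0 := by linear_combination ha - hb
  refine (mul_eq_zero.1 hmul).elim sub_eq_zero.1 fun hfst ↦ absurd (Prod.ext ?_ ?_) huv
  · exact sub_eq_zero.1 hfst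
  · linear_combination ha - a * hfst

lemma sum_collisionCount_slope_le (P : Finset ι) (p : ι → F × F) :
    ∑ a : F, collisionCount P (fun i ↦ a * (p i).1 + (p i).2) ≤
      #P ^ 2 + Fintype.card F * collisionCount P p := by
  have hslopes (u v : F × F) : #{a : F | a * u.1 + u.2 = a * v.1 + v.2} ≤
      1 + if u = v then Fintype.card F else 0 := by
    split_ifs with huv
    · exact (card_le_univ _).trans (Nat.le_add_left _ _)
    · exact card_common_slope_le_one huv
  calc ∑ a : F, collisionCount P (fun i ↦ a * (p i).1 + (p i).2)
      = ∑ v ∈ P ×ˢ P, #{a : F | a * (p v.1).1 + (p v.1).2 = a * (p v.2).1 + (p v.2).2} := by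
        simp only [collisionCount, card_filter]
        exact sum_comm
    _ ≤ ∑ v ∈ P ×ˢ P, (1 + if p v.1 = p v.2 then Fintype.card F else 0) :=
        sum_le_sum fun v _ ↦ hslopes _ _
    _ = #P ^ 2 + Fintype.card F * collisionCount P p := by
        rw [sum_add_distrib, ← sum_filter, sum_const, sum_const, card_product, collisionCount]
        simp only [smul_eq_mul]
        ring

lemma sum_sq_card_line_sub_average_le (P : Finset ι) (p : ι → F × F) :
    ∑ c : F × F, (#{i ∈ P | c.1 * (p i).1 + (p i).2 = c.2} - (#P : ℝ) / Fintype.card F) ^ 2 ≤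
      Fintype.card F * collisionCount P p := by
  have hq : (Fintype.card F : ℝ) ≠ 0 := Nat.cast_ne_zero.2 Fintype.card_ne_zero
  have hsum : ∑ a : F, (collisionCount P (fun i ↦ a * (p i).1 + (p i).2) : ℝ) ≤
      (#P : ℝ) ^ 2 + Fintype.card F * collisionCount P p := by
    exact_mod_cast sum_collisionCount_slope_le P p
  rw [Fintype.sum_prod_type]
  simp only [sum_sq_card_fiber_sub_average, sum_sub_distrib, sum_const, card_univ, nsmul_eq_mul,
    mul_div_cancel₀ _ hq]
  linarith

/- Vinh's incidence bound; Fourier analysis is replaced by the variance, over all nonvertical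
lines of the plane, of the number of points on a line. -/
theorem sq_incidenceCount_sub_le {P : Finset ι} {p : ι → F × F} {T : Finset κ} {ℓ : κ → F × F}
    {m m' : ℕ} (hℓ : ∀ c, #{j ∈ T | ℓ j = c} ≤ m) (hp : ∀ u, #{i ∈ P | p i = u} ≤ m') :
    (incidenceCount P p T ℓ - (#P * #T : ℝ) / Fintype.card F) ^ 2 ≤
      m * m' * Fintype.card F * (#P * #T) := by
  let dev (c : F × F) : ℝ :=
    #{i ∈ P | c.1 * (p i).1 + (p i).2 = c.2} - (#P : ℝ) / Fintype.card F
  calc (incidenceCount P p T ℓ - (#P * #T : ℝ) / Fintype.card F) ^ 2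
      = (∑ j ∈ T, dev (ℓ j)) ^ 2 := by
        simp only [dev, incidenceCount, sum_sub_distrib, sum_const, nsmul_eq_mul, Nat.cast_sum]
        ring
    _ ≤ #T * ∑ j ∈ T, dev (ℓ j) ^ 2 := sq_sum_le_card_mul_sum_sq
    _ ≤ #T * (m * ∑ c, dev c ^ 2) := by
        gcongr
        exact sum_comp_le_mul_sum_s14 (fun c ↦ sq_nonneg (dev c)) hℓ
    _ ≤ #T * (m * (Fintype.card F * (m' * #P))) := by
        gcongr
        refine (sum_sq_card_line_sub_average_le P p).trans ?_
        gcongr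
        exact_mod_cast collisionCount_le_mul_card hp
    _ = m * m' * Fintype.card F * (#P * #T) := by ring

end Incidences

section ShiftedImages

variable {F ι : Type*} [Field F] [DecidableEq F] {X : Finset ι} {Y E S : Finset F} {g h w : ι → F}

/-- The number of solutions of `w z + g x * (h x + y) = s` in `x, z ∈ X`, `y ∈ Y`, `s ∈ S`, as
incidences between the points `(y, w z)` and the lines `g x * Y₁ + Y₂ = s - g x * h x`. -/
def shiftedIncidenceCount (X : Finset ι) (Y S : Finset F) (g h w : ι → F) : ℕ :=
  incidenceCount (Y ×ˢ X) (fun v ↦ (v.1, w v.2)) (X ×ˢ S) (fun v ↦ (g v.1, v.2 - g v.1 * h v.1))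

lemma collisionCount_le_shiftedIncidenceCount (hg₀ : ∀ x ∈ X, g x ≠ 0)
    (hS : ∀ x ∈ X, ∀ y ∈ Y, w x + g x * (h x + y) ∈ S) :
    collisionCount (X ×ˢ Y) (fun v ↦ g v.1 * (h v.1 + v.2)) ≤
      shiftedIncidenceCount X Y S g h w := by
  rw [shiftedIncidenceCount, incidenceCount, ← card_sigma]
  refine card_le_card_of_injOn
    (fun v ↦ ⟨(v.1.1, w v.2.1 + g v.1.1 * (h v.1.1 + v.1.2)), (v.1.2, v.2.1)⟩) ?_ ?_
  · rintro ⟨⟨x, y⟩, z, t⟩ hv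
    simp only [coe_filter, mem_product, Set.mem_ofPred_eq] at hv
    obtain ⟨⟨⟨hx, hy⟩, hz, ht⟩, heq⟩ := hv
    simp only [coe_sigma, Set.mem_sigma_iff, mem_coe, mem_product, mem_filter]
    exact ⟨⟨hx, heq ▸ hS z hz t ht⟩, ⟨hy, hz⟩, by ring⟩
  · rintro ⟨⟨x, y⟩, z, t⟩ hv ⟨⟨x', y'⟩, z', t'⟩ hv' heq
    simp only [coe_filter, mem_product, Set.mem_ofPred_eq] at hv hv'
    simp only [Sigma.mk.injEq, Prod.mk.injEq, heq_eq_eq] at heq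
    obtain ⟨⟨rfl, -⟩, rfl, rfl⟩ := heq
    have ht : t = t' := add_left_cancel (mul_left_cancel₀ (hg₀ z hv.1.2.1) (hv.2.symm.trans hv'.2))
    rw [ht]

lemma sq_card_mul_card_le_card_mul_shiftedIncidenceCount (hg₀ : ∀ x ∈ X, g x ≠ 0)
    (hE : ∀ x ∈ X, ∀ y ∈ Y, g x * (h x + y) ∈ E)
    (hS : ∀ x ∈ X, ∀ y ∈ Y, w x + g x * (h x + y) ∈ S) :
    (#X * #Y) ^ 2 ≤ #E * shiftedIncidenceCount X Y S g h w := by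
  have hmaps : ∀ v ∈ X ×ˢ Y, g v.1 * (h v.1 + v.2) ∈ E := fun v hv ↦
    hE _ (mem_product.1 hv).1 _ (mem_product.1 hv).2
  rw [← card_product]
  exact (card_sq_le_card_mul_collisionCount hmaps).trans
    (Nat.mul_le_mul_left _ (collisionCount_le_shiftedIncidenceCount hg₀ hS))

variable [Fintype F] {m m' : ℕ}

lemma sq_shiftedIncidenceCount_sub_le (hg : ∀ a, #{x ∈ X | g x = a} ≤ m)
    (hw : ∀ a, #{x ∈ X | w x = a} ≤ m') :
    (shiftedIncidenceCount X Y S g h w - (#X ^ 2 * #Y * #S : ℝ) / Fintype.card F) ^ 2 ≤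
      m * m' * Fintype.card F * (#X ^ 2 * #Y * #S) := by
  have hcard : (#(Y ×ˢ X) * #(X ×ˢ S) : ℝ) = #X ^ 2 * #Y * #S := by
    rw [card_product, card_product]
    push_cast
    ring
  rw [← hcard]
  exact sq_incidenceCount_sub_le (card_filter_prodMk_sub_eq_le (k := fun x ↦ g x * h x) hg)
    (card_filter_prodMk_eq_le hw)

/- The alternatives are the main term and the error term of the incidence bound dominating. -/
theorem card_mul_card_ge_or_sq_mul_card_ge (hg₀ : ∀ x ∈ X, g x ≠ 0)
    (hg : ∀ a, #{x ∈ X | g x = a} ≤ m) (hw : ∀ a, #{x ∈ X | w x = a} ≤ m')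
    (hE : ∀ x ∈ X, ∀ y ∈ Y, g x * (h x + y) ∈ E)
    (hS : ∀ x ∈ X, ∀ y ∈ Y, w x + g x * (h x + y) ∈ S) :
    (Fintype.card F * #Y / 2 : ℝ) ≤ #E * #S ∨
      (#X ^ 2 * #Y ^ 3 : ℝ) ≤ 4 * (m * m' * Fintype.card F) * (#E ^ 2 * #S) := by
  have hlower : (#X * #Y : ℝ) ^ 2 ≤ #E * shiftedIncidenceCount X Y S g h w := by
    exact_mod_cast sq_card_mul_card_le_card_mul_shiftedIncidenceCount hg₀ hE hS
  have hupper := sq_shiftedIncidenceCount_sub_le (Y := Y) (S := S) (h := h) hg hw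
  set N := shiftedIncidenceCount X Y S g h w
  have hq : (0 : ℝ) < Fintype.card F := Nat.cast_pos.2 Fintype.card_pos
  refine or_iff_not_imp_left.2 fun hsmall ↦ ?_
  rcases (by positivity : (0 : ℝ) ≤ #X ^ 2 * #Y).eq_or_lt with hXY | hXY
  · calc (#X ^ 2 * #Y ^ 3 : ℝ) = (#X ^ 2 * #Y) * #Y ^ 2 := by ring
      _ = 0 := by rw [← hXY, zero_mul]
      _ ≤ _ := by positivity
  have hmain : #E * ((#X ^ 2 * #Y * #S : ℝ) / Fintype.card F) ≤ (#X * #Y : ℝ) ^ 2 / 2 :=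
    calc #E * ((#X ^ 2 * #Y * #S : ℝ) / Fintype.card F)
        = #X ^ 2 * #Y / Fintype.card F * (#E * #S) := by ring
      _ ≤ #X ^ 2 * #Y / Fintype.card F * (Fintype.card F * #Y / 2) := by
          gcongr
          exact (not_le.1 hsmall).le
      _ = (#X * #Y : ℝ) ^ 2 / 2 := by field
  have herror : ((#X * #Y : ℝ) ^ 2 / 2) ^ 2 ≤
      (#E * (N - (#X ^ 2 * #Y * #S : ℝ) / Fintype.card F)) ^ 2 := by
    gcongr
    linarith
  refine le_of_mul_le_mul_left ?_ hXY
  calc (#X ^ 2 * #Y * (#X ^ 2 * #Y ^ 3) : ℝ) = 4 * ((#X * #Y : ℝ) ^ 2 / 2) ^ 2 := by ring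
    _ ≤ 4 * (#E * (N - (#X ^ 2 * #Y * #S : ℝ) / Fintype.card F)) ^ 2 := by gcongr
    _ ≤ 4 * (#E ^ 2 * (m * m' * Fintype.card F * (#X ^ 2 * #Y * #S))) := by
        rw [mul_pow]
        gcongr
    _ = #X ^ 2 * #Y * (4 * (m * m' * Fintype.card F) * (#E ^ 2 * #S)) := by ring

lemma sq_ge_or_cube_ge_of_card_le {A : Finset F} {g h w : F → F} {M : ℝ} (hg₀ : ∀ x ∈ A, g x ≠ 0)
    (hg : ∀ a, #{x ∈ A | g x = a} ≤ m) (hw : ∀ a, #{x ∈ A | w x = a} ≤ m')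
    (hE : #(image₂ (fun x y ↦ g x * (h x + y)) A A) ≤ M)
    (hS : #(image₂ (fun x y ↦ w x + g x * (h x + y)) A A) ≤ M) :
    (Fintype.card F * #A / 2 : ℝ) ≤ M ^ 2 ∨
      (#A ^ 5 : ℝ) ≤ 4 * (m * m' * Fintype.card F) * M ^ 3 := by
  have hM : 0 ≤ M := (Nat.cast_nonneg _).trans hE
  rcases card_mul_card_ge_or_sq_mul_card_ge (h := h) hg₀ hg hw
    (forall_mem_image₂.1 fun _ ↦ id) (forall_mem_image₂.1 fun _ ↦ id) with hmain | herror
  · refine .inl (hmain.trans ?_)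
    rw [sq M]
    gcongr
  · rw [← pow_add] at herror
    refine .inr (herror.trans ?_)
    rw [pow_succ M]
    gcongr

end ShiftedImages

end

lemma rpow_inv_mul_rpow_le {k n M d e : ℝ} {r : ℕ} (hr : r ≠ 0) (hk : 0 ≤ k) (hn : 1 ≤ n)
    (hM : 0 ≤ M) (hd : d * r ≤ e) (h : k * n ^ e ≤ M ^ r) : k ^ (r⁻¹ : ℝ) * n ^ d ≤ M := by
  refine le_of_pow_le_pow_left₀ hr hM ?_
  rw [mul_pow, Real.rpow_inv_natCast_pow hk hr, ← Real.rpow_mul_natCast (zero_le_one.trans hn)]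
  refine le_trans ?_ h
  gcongr

section Exponents

variable {α c n q M : ℝ}

lemma mul_rpow_le_of_mul_le_sq (hα : 0 < α) (hc : 0 < c) (hn : 1 ≤ n) (hq : 0 ≤ q) (hM : 0 ≤ M)
    (hnq : n ≤ c * q ^ α) (h : q * n / 2 ≤ M ^ 2) :
    (c⁻¹ ^ α⁻¹ / 2) ^ (2⁻¹ : ℝ) * n ^ (1 + (α⁻¹ - 1) / 2) ≤ M := by
  have hn₀ : 0 < n := by positivity
  have hle : c⁻¹ ^ α⁻¹ * n ^ α⁻¹ ≤ q := by
    rw [← Real.mul_rpow (by positivity) hn₀.le, Real.rpow_inv_le_iff_of_pos (by positivity) hq hα]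
    rwa [inv_mul_le_iff₀ hc]
  refine rpow_inv_mul_rpow_le (r := 2) (e := α⁻¹ + 1) two_ne_zero (by positivity) hn hM ?_ ?_
  · push_cast
    linarith
  · calc c⁻¹ ^ α⁻¹ / 2 * n ^ (α⁻¹ + 1) = c⁻¹ ^ α⁻¹ * n ^ α⁻¹ * n / 2 := by
          rw [Real.rpow_add_one hn₀.ne']
          ring
      _ ≤ q * n / 2 := by gcongr
      _ ≤ M ^ 2 := h

lemma mul_rpow_le_of_pow_five_le {K : ℝ} (hα : 0 < α) (hc : 0 < c) (hK : 0 < K) (hn : 1 ≤ n)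
    (hq : 0 ≤ q) (hM : 0 ≤ M) (hqn : c * q ^ α ≤ n) (h : n ^ 5 ≤ 4 * (K * q) * M ^ 3) :
    (c ^ α⁻¹ / (4 * K)) ^ (3⁻¹ : ℝ) * n ^ (1 + (2 - α⁻¹) / 3) ≤ M := by
  have hn₀ : 0 < n := by positivity
  have hle : c ^ α⁻¹ * q ≤ n ^ α⁻¹ := by
    rwa [mul_comm, ← le_div_iff₀ (by positivity), ← Real.div_rpow hn₀.le hc.le,
      Real.le_rpow_inv_iff_of_pos hq (by positivity) hα, le_div_iff₀' hc]
  refine rpow_inv_mul_rpow_le (r := 3) (e := 5 - α⁻¹) three_ne_zero (by positivity) hn hM ?_ ?_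
  · push_cast
    linarith
  · calc c ^ α⁻¹ / (4 * K) * n ^ (5 - α⁻¹) = c ^ α⁻¹ / (4 * K) * (n ^ 5 / n ^ α⁻¹) := by
          rw [Real.rpow_sub hn₀]
          norm_cast
      _ ≤ c ^ α⁻¹ / (4 * K) * (4 * (K * q) * M ^ 3 / n ^ α⁻¹) := by gcongr
      _ = c ^ α⁻¹ * q / n ^ α⁻¹ * M ^ 3 := by field
      _ ≤ 1 * M ^ 3 := by
          gcongr
          exact div_le_one_of_le₀ hle (by positivity)
      _ = M ^ 3 := one_mul _

end Exponents

theorem stmt_14_general (m m' : ℕ) (hm : 0 < m) (hm' : 0 < m') (α c₁ c₂ : ℝ) (hα₁ : 1 / 2 < α)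
    (hα₂ : α < 1) (hc₁ : 0 < c₁) (hc₂ : 0 < c₂) :
    ∃ Δ : ℝ, 0 < Δ ∧ ∃ κ : ℝ, 0 < κ ∧
      ∀ (F : Type*) [Field F] [Fintype F] [DecidableEq F] (A : Finset F) (g h w : F → F),
      (∀ x ∈ A, g x ≠ 0) →
      (∀ t, (A.filter fun x ↦ g x = t).card ≤ m) → (∀ t, (A.filter fun x ↦ w x = t).card ≤ m') →
      c₁ * (Fintype.card F : ℝ) ^ α ≤ A.card → (A.card : ℝ) ≤ c₂ * (Fintype.card F : ℝ) ^ α →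
      κ * (A.card : ℝ) ^ (1 + Δ) ≤
        max ((Finset.image₂ (fun x y ↦ g x * (h x + y)) A A).card : ℝ)
          (Finset.image₂ (fun x y ↦ w x + g x * (h x + y)) A A).card := by
  have hα : 0 < α := by linarith
  have hinv₁ : 1 < α⁻¹ := (one_lt_inv₀ hα).2 hα₂
  have hinv₂ : α⁻¹ < 2 := (inv_lt_comm₀ hα two_pos).2 (by linarith)
  set k₁ : ℝ := (c₂⁻¹ ^ α⁻¹ / 2) ^ (2⁻¹ : ℝ)
  set k₂ : ℝ := (c₁ ^ α⁻¹ / (4 * (m * m'))) ^ (3⁻¹ : ℝ)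
  have hκ : 0 < min k₁ k₂ := lt_min (by positivity) (by positivity)
  refine ⟨min ((α⁻¹ - 1) / 2) ((2 - α⁻¹) / 3), lt_min (by linarith) (by linarith),
    min k₁ k₂, hκ, fun F _ _ _ A g h w hg₀ hg hw hlo hhi ↦ ?_⟩
  set M : ℝ := max _ _
  have hM : 0 ≤ M := (Nat.cast_nonneg _).trans (le_max_left _ _)
  have hq : (0 : ℝ) < Fintype.card F := Nat.cast_pos.2 Fintype.card_pos
  have hn : (1 : ℝ) ≤ A.card := by
    exact_mod_cast Nat.cast_pos.1 (lt_of_lt_of_le (by positivity) hlo)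
  rcases sq_ge_or_cube_ge_of_card_le hg₀ hg hw (le_max_left _ _) (le_max_right _ _)
    with hmain | herror
  · refine le_trans ?_ (mul_rpow_le_of_mul_le_sq hα hc₂ hn hq.le hM hhi hmain)
    gcongr <;> exact min_le_left _ _
  · refine le_trans ?_ (mul_rpow_le_of_pow_five_le hα hc₁ (by positivity) hn hq.le hM hlo herror)
    gcongr <;> exact min_le_right _ _

/-- Theorem 6: for fixed `m, m'`, `1/2 < α < 1` and `0 < c₁ < c₂` there are `Δ > 0`
and `κ > 0` such that for `f(x,y) = g(x)(h(x)+y)` with `μ(g) ≤ m` and any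
`w : G → 𝔽_p` with `μ(w) ≤ m'`, every `A ⊆ G` with `c₁·p^α < |A| < c₂·p^α` satisfies
`max(|f(A,A)|, |S_w(f)(A,A)|) ≥ κ·|A|^{1+Δ}`, where `S_w(f)(x,y) = w(x) + f(x,y)`. -/
theorem stmt_14 (m m' : ℕ) (hm : 0 < m) (hm' : 0 < m')
    (α c₁ c₂ : ℝ) (hα₁ : 1 / 2 < α) (hα₂ : α < 1) (hc₁ : 0 < c₁) (hc₁₂ : c₁ < c₂) :
    ∃ Δ : ℝ, 0 < Δ ∧ ∃ κ : ℝ, 0 < κ ∧ ∀ (p : ℕ), p.Prime →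
    ∀ G : Finset (ZMod p), (0 : ZMod p) ∉ G → (1 : ZMod p) ∈ G →
      (∀ x ∈ G, ∀ y ∈ G, x * y ∈ G) → (∀ x ∈ G, x⁻¹ ∈ G) →
    ∀ g h : ZMod p → ZMod p, (∀ x ∈ G, g x ≠ 0) → (∀ x ∈ G, h x ≠ 0) →
      (∀ t : ZMod p, (G.filter fun x => g x = t).card ≤ m) →
    ∀ w : ZMod p → ZMod p,
      (∀ t : ZMod p, (G.filter fun x => w x = t).card ≤ m') →
    ∀ A : Finset (ZMod p), A ⊆ G →
      c₁ * (p : ℝ) ^ α < (A.card : ℝ) → (A.card : ℝ) < c₂ * (p : ℝ) ^ α →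
      max ((Finset.image₂ (fun x y => g x * (h x + y)) A A).card : ℝ)
          ((Finset.image₂ (fun x y => w x + g x * (h x + y)) A A).card : ℝ) ≥
        κ * (A.card : ℝ) ^ ((1 : ℝ) + Δ) := by
  obtain ⟨Δ, hΔ, κ, hκ, hgrowth⟩ :=
    stmt_14_general m m' hm hm' α c₁ c₂ hα₁ hα₂ hc₁ (hc₁.trans hc₁₂)
  refine ⟨Δ, hΔ, κ, hκ, fun p hp G _ _ _ _ g h hg₀ _ hg w hw A hAG hlo hhi ↦ ?_⟩
  have := Fact.mk hp
  have hfilter (f : ZMod p → ZMod p) (t : ZMod p) := Finset.card_le_card <|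
    Finset.filter_subset_filter (fun x ↦ f x = t) hAG
  exact hgrowth (ZMod p) A g h w (fun x hx ↦ hg₀ x (hAG hx)) (fun t ↦ (hfilter g t).trans (hg t))
    (fun t ↦ (hfilter w t).trans (hw t)) (by rw [ZMod.card]; exact hlo.le)
    (by rw [ZMod.card]; exact hhi.le)
end

section
/- There exists an absolute constant κ > 0 with the following property. Let p be a prime and A ⊆ 𝔽_p^* a set with |A| ≤ p^{1/2 − 1/500}. Define f(x,y) = xy(x + y). Then max( |f(A,A)|, |A·A| ) ≥ κ · |A|^{1 + 1/800}. -/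
open Pointwise

/-!
Let `K = max(|f(A, A)|, |A·A|) / |A|`; every loss below is polynomial in `K`.

* By Cauchy–Schwarz, `xy(x + y) = zt(z + t)` has many solutions in `A`. Since `A / A` is small by
  Plünnecke–Ruzsa, some `x = x₀` and `t / z = u` are popular, so for a large set `Y` of `y ∈ A` the
  value `x₀y(x₀ + y)` is `u(1 + u)` times a cube of an element of `A`.
* Hence `y(a + x₀)/a` lies in a dilate `S` of `A⁴ / A²` for all `a, y ∈ Y`, and `S` is small too.
  As `y(a + x₀)/a - z(b + x₀)/b = y - z` whenever `a / b = y / z`, each difference `y - z` for which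
  `y / z` is a popular quotient has many representations in `S - S`. Most pairs are of this kind, so
  a large `B ⊆ Y` has a small difference set.
* Now `B·B` and `B - B` are both small, contradicting the sum-product theorem, which is proved by
  the pivot argument: there is a quotient `r = (a - b)/(c - d)` of differences of `B` for which
  `B + rB` or `B + (r + 1)B` has size `≫ |B|²`, and after multiplying by `c - d` this set lies in
  `3NB - 3NB` with `N = {a, b, c, d}`. If all dilates `bB` overlap a fixed `b₀B` substantially, then
  `NB` is additively close to `b₀B`, so `3NB - 3NB` has size `≪ |B|`.
-/

section

open Finset

section Counting

variable {ι α β : Type*}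

lemma sq_sum_card_le_card_biUnion_mul_sum_card_inter [DecidableEq α] (s : Finset ι)
    (S : ι → Finset α) :
    (∑ i ∈ s, #(S i)) ^ 2 ≤ #(s.biUnion S) * ∑ i ∈ s, ∑ j ∈ s, #(S i ∩ S j) := by
  let U := s.biUnion S
  let ind (i : ι) (x : α) : ℕ := if x ∈ S i then 1 else 0
  have hcard : ∀ i ∈ s, #(S i) = ∑ x ∈ U, ind i x := fun i hi => by
    rw [← card_filter, filter_mem_eq_inter, inter_eq_right.2 (subset_biUnion_of_mem S hi)]
  have hinter : ∀ i ∈ s, ∀ j, #(S i ∩ S j) = ∑ x ∈ U, ind i x * ind j x := fun i hi j => by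
    simp only [ind, ← ite_and, mul_ite, mul_one, mul_zero, ← card_filter]
    congr 1
    ext x
    simp only [mem_inter, mem_filter, U, mem_biUnion]
    tauto
  calc (∑ i ∈ s, #(S i)) ^ 2 = (∑ x ∈ U, ∑ i ∈ s, ind i x) ^ 2 := by
        rw [sum_congr rfl hcard, sum_comm]
    _ ≤ #U * ∑ x ∈ U, (∑ i ∈ s, ind i x) ^ 2 := sq_sum_le_card_mul_sum_sq
    _ = #U * ∑ i ∈ s, ∑ j ∈ s, #(S i ∩ S j) := by
        rw [sum_congr rfl fun i hi => sum_congr rfl fun j _ => hinter i hi j]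
        simp only [sq, sum_mul_sum]
        rw [sum_comm]
        exact congrArg _ (sum_congr rfl fun i _ => sum_comm)

lemma card_sq_le_card_image_mul_card_filter_eq [DecidableEq β] (s : Finset α) (f : α → β) :
    #s ^ 2 ≤ #(s.image f) * #{q ∈ s ×ˢ s | f q.1 = f q.2} := by
  have h := sq_sum_card_le_card_biUnion_mul_sum_card_inter s fun a => {f a}
  have hinter (a b : α) : #(({f a} : Finset β) ∩ {f b}) = if f a = f b then 1 else 0 := by
    simp only [singleton_inter, mem_singleton, apply_ite card, card_singleton, card_empty]
  simpa only [card_singleton, sum_const, smul_eq_mul, mul_one, biUnion_singleton, hinter,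
    card_filter, sum_product] using h

lemma sum_le_card_mul_add_card_filter_mul (s : Finset ι) (w : ι → ℝ) {M θ : ℝ}
    (hw : ∀ i ∈ s, w i ≤ M) :
    ∑ i ∈ s, w i ≤ #s * θ + #{i ∈ s | θ ≤ w i} * (M - θ) := by
  calc ∑ i ∈ s, w i ≤ ∑ i ∈ s, (θ + if θ ≤ w i then M - θ else 0) := by
        refine sum_le_sum fun i hi => ?_
        split_ifs with h <;> linarith [hw i hi]
    _ = #s * θ + #{i ∈ s | θ ≤ w i} * (M - θ) := by
        rw [sum_add_distrib, ← sum_filter, sum_const, sum_const, nsmul_eq_mul, nsmul_eq_mul]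

lemma card_mul_le_card_of_le_card_fiber [DecidableEq β] (s : Finset α) (t : Finset β) (f : α → β)
    {τ : ℝ} (h : ∀ b ∈ t, τ ≤ #{a ∈ s | f a = b}) : #t * τ ≤ #s := by
  calc #t * τ ≤ ∑ b ∈ t, (#{a ∈ s | f a = b} : ℝ) := by
        simpa only [nsmul_eq_mul] using card_nsmul_le_sum t _ τ h
    _ = #{a ∈ s | f a ∈ t} := by exact_mod_cast sum_card_fiberwise_eq_card_filter s t f
    _ ≤ #s := by exact_mod_cast card_filter_le _ _

lemma card_le_card_image_mul_add_card_filter_le_card_fiber [DecidableEq β] (s : Finset α)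
    (f : α → β) {τ : ℝ} (hτ : 0 ≤ τ) :
    (#s : ℝ) ≤ #(s.image f) * τ + #{a ∈ s | τ ≤ #{b ∈ s | f b = f a}} := by
  let rare : Finset α := {a ∈ s | ¬ τ ≤ #{b ∈ s | f b = f a}}
  have hfiber (v : β) (_ : v ∈ s.image f) : (#{a ∈ rare | f a = v} : ℝ) ≤ τ := by
    rcases eq_empty_or_nonempty {a ∈ rare | f a = v} with hv | ⟨a, ha⟩
    · simpa [hv] using hτ
    · obtain ⟨harare, rfl⟩ := mem_filter.1 ha
      refine le_trans ?_ (not_le.1 (mem_filter.1 harare).2).le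
      exact_mod_cast card_le_card (filter_subset_filter _ (filter_subset _ _))
  have hmaps : ∀ a ∈ rare, f a ∈ s.image f := fun a ha =>
    mem_image_of_mem f (mem_of_mem_filter a ha)
  have hrare : (#rare : ℝ) ≤ #(s.image f) * τ := by
    calc (#rare : ℝ) = ∑ v ∈ s.image f, (#{a ∈ rare | f a = v} : ℝ) := by
          exact_mod_cast card_eq_sum_card_fiberwise hmaps
      _ ≤ #(s.image f) * τ := by
          simpa only [nsmul_eq_mul] using sum_le_card_nsmul _ _ τ hfiber
  have hsplit := card_filter_add_card_filter_not (s := s) fun a => τ ≤ #{b ∈ s | f b = f a}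
  have hsplit : (#{a ∈ s | τ ≤ #{b ∈ s | f b = f a}} + #rare : ℝ) = #s := by exact_mod_cast hsplit
  linarith

lemma pos_of_natCast_le_mul_natCast {m n : ℕ} (hm : 0 < m) {K : ℝ} (h : (m : ℝ) ≤ K * n) : 0 < K :=
  pos_of_mul_pos_left ((Nat.cast_pos.2 hm).trans_le h) (Nat.cast_nonneg _)

lemma exists_card_mul_le_sum_card_inter [DecidableEq α] {s : Finset ι} (hs : s.Nonempty)
    {S : ι → Finset α} {m : ℕ} (hm : 0 < m) (hS : ∀ i ∈ s, #(S i) = m) {L : ℝ}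
    (hL : (#(s.biUnion S) : ℝ) ≤ L * m) :
    ∃ i ∈ s, (#s * m : ℝ) ≤ L * ∑ j ∈ s, (#(S i ∩ S j) : ℝ) := by
  have hm0 : (0 : ℝ) < m := by exact_mod_cast hm
  have hCS : ((#s : ℝ) * m) ^ 2 ≤ #(s.biUnion S) * ∑ i ∈ s, ∑ j ∈ s, (#(S i ∩ S j) : ℝ) := by
    have h := sq_sum_card_le_card_biUnion_mul_sum_card_inter s S
    rw [sum_congr rfl hS, sum_const, smul_eq_mul] at h
    exact_mod_cast h
  refine exists_le_of_sum_le hs ?_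
  rw [sum_const, nsmul_eq_mul, ← mul_sum]
  refine le_of_mul_le_mul_right ?_ hm0
  calc #s * (#s * m) * m = ((#s : ℝ) * m) ^ 2 := by ring
    _ ≤ L * m * ∑ i ∈ s, ∑ j ∈ s, (#(S i ∩ S j) : ℝ) :=
      hCS.trans (mul_le_mul_of_nonneg_right hL (by positivity))
    _ = L * (∑ i ∈ s, ∑ j ∈ s, (#(S i ∩ S j) : ℝ)) * m := by ring

lemma exists_subset_forall_le_card_inter [DecidableEq α] {s : Finset ι} (hs : s.Nonempty)
    {S : ι → Finset α} {m : ℕ} (hm : 0 < m) (hS : ∀ i ∈ s, #(S i) = m) {L : ℝ}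
    (hL : (#(s.biUnion S) : ℝ) ≤ L * m) :
    ∃ i₀ ∈ s, ∃ t ⊆ s, (#s : ℝ) ≤ 2 * L * #t ∧ ∀ i ∈ t, (m : ℝ) ≤ 2 * L * #(S i₀ ∩ S i) := by
  have hm0 : (0 : ℝ) < m := by exact_mod_cast hm
  obtain ⟨i₀, hi₀, hsum⟩ := exists_card_mul_le_sum_card_inter hs hm hS hL
  have hL0 : 0 < L := by
    refine pos_of_natCast_le_mul_natCast (card_pos.2 ?_) hL
    exact (card_pos.1 (hm.trans_eq (hS i₀ hi₀).symm)).mono (subset_biUnion_of_mem S hi₀)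
  have hle (j : ι) (_ : j ∈ s) : (#(S i₀ ∩ S j) : ℝ) ≤ m := by
    exact_mod_cast (card_le_card inter_subset_left).trans (hS i₀ hi₀).le
  let t : Finset ι := {j ∈ s | m / (2 * L) ≤ (#(S i₀ ∩ S j) : ℝ)}
  have hpop := sum_le_card_mul_add_card_filter_mul s (θ := m / (2 * L)) _ hle
  refine ⟨i₀, hi₀, t, filter_subset _ s, ?_, fun i hi => ?_⟩
  · refine le_of_mul_le_mul_right ?_ hm0
    have hθ : (0 : ℝ) ≤ #t * (m / (2 * L)) := by positivity
    calc #s * (m : ℝ) = 2 * (#s * m) - 2 * L * (#s * (m / (2 * L))) := by field_simp; ring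
      _ ≤ 2 * (L * (#s * (m / (2 * L)) + #t * (m - m / (2 * L)))) -
          2 * L * (#s * (m / (2 * L))) := by
        linarith [hsum.trans (mul_le_mul_of_nonneg_left hpop hL0.le)]
      _ = 2 * L * (#t * m - #t * (m / (2 * L))) := by ring
      _ ≤ 2 * L * (#t * m) := by gcongr; linarith
      _ = 2 * L * #t * m := by ring
  · have h := (mem_filter.1 hi).2
    rw [div_le_iff₀ (by positivity)] at h
    linarith

end Counting

section Pivot

variable {R : Type*} [Ring R] [DecidableEq R]

lemma image_add_mul_product (A B : Finset R) (ξ : R) :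
    (A ×ˢ B).image (fun q => q.1 + ξ * q.2) = A + ξ • B := by
  ext x
  simp [mem_add, mem_smul_finset, and_assoc]

variable [IsDomain R]

lemma card_filter_add_mul_eq_le_one (Ξ : Finset R) {q q' : R × R} (hq : q ≠ q') :
    #{ξ ∈ Ξ | q.1 + ξ * q.2 = q'.1 + ξ * q'.2} ≤ 1 := by
  refine card_le_one.2 fun s hs t ht => ?_
  have hs := (mem_filter.1 hs).2
  have ht := (mem_filter.1 ht).2
  have hst : (s - t) * (q.2 - q'.2) = 0 := by
    have h := congrArg₂ (· - ·) hs ht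
    simp only [add_sub_add_left_eq_sub, ← sub_mul] at h
    rw [mul_sub, h, sub_self]
  refine sub_eq_zero.1 ((mul_eq_zero.1 hst).resolve_right fun hy => hq ?_)
  have hy := sub_eq_zero.1 hy
  exact Prod.ext (by simpa [hy] using hs) hy

lemma sum_card_filter_add_mul_eq_le (P : Finset (R × R)) (Ξ : Finset R) :
    ∑ ξ ∈ Ξ, #{q ∈ P ×ˢ P | q.1.1 + ξ * q.1.2 = q.2.1 + ξ * q.2.2} ≤ #P * #Ξ + #P ^ 2 := by
  have hpair (q : (R × R) × (R × R)) :
      #{ξ ∈ Ξ | q.1.1 + ξ * q.1.2 = q.2.1 + ξ * q.2.2} ≤ (if q.1 = q.2 then #Ξ else 0) + 1 := by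
    split_ifs with h
    · exact (card_filter_le _ _).trans (Nat.le_succ _)
    · simpa only [zero_add] using card_filter_add_mul_eq_le_one Ξ h
  calc ∑ ξ ∈ Ξ, #{q ∈ P ×ˢ P | q.1.1 + ξ * q.1.2 = q.2.1 + ξ * q.2.2}
      = ∑ q ∈ P ×ˢ P, #{ξ ∈ Ξ | q.1.1 + ξ * q.1.2 = q.2.1 + ξ * q.2.2} :=
        sum_card_bipartiteAbove_eq_sum_card_bipartiteBelow _
    _ ≤ ∑ q ∈ P ×ˢ P, ((if q.1 = q.2 then #Ξ else 0) + 1) := sum_le_sum fun q _ => hpair q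
    _ = #P * #Ξ + #P ^ 2 := by
        simp only [sum_add_distrib, sum_product, sum_ite_eq, sum_ite_mem, inter_self, sum_const,
          card_product, smul_eq_mul, mul_one, sq]

lemma exists_card_mul_card_le_two_mul_card_add_smul (A B : Finset R) {Ξ : Finset R}
    (hΞ : Ξ.Nonempty) (hcard : #A * #B ≤ #Ξ) :
    ∃ ξ ∈ Ξ, #A * #B ≤ 2 * #(A + ξ • B) := by
  let energy (ξ : R) : ℕ :=
    #{q ∈ (A ×ˢ B) ×ˢ (A ×ˢ B) | q.1.1 + ξ * q.1.2 = q.2.1 + ξ * q.2.2}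
  have hsum : ∑ ξ ∈ Ξ, energy ξ ≤ ∑ _ξ ∈ Ξ, 2 * (#A * #B) := by
    have h := sum_card_filter_add_mul_eq_le (A ×ˢ B) Ξ
    rw [card_product] at h
    calc ∑ ξ ∈ Ξ, energy ξ ≤ #A * #B * #Ξ + #A * #B * (#A * #B) := by rwa [sq] at h
      _ ≤ #A * #B * #Ξ + #A * #B * #Ξ := by gcongr
      _ = ∑ _ξ ∈ Ξ, 2 * (#A * #B) := by rw [sum_const, smul_eq_mul]; ring
  obtain ⟨ξ, hξ, henergy⟩ := exists_le_of_sum_le hΞ hsum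
  refine ⟨ξ, hξ, ?_⟩
  have hCS := card_sq_le_card_image_mul_card_filter_eq (A ×ˢ B) fun q => q.1 + ξ * q.2
  rw [image_add_mul_product, card_product] at hCS
  rcases Nat.eq_zero_or_pos (#A * #B) with h0 | hpos
  · exact h0.le.trans (Nat.zero_le _)
  · refine Nat.le_of_mul_le_mul_right ?_ hpos
    calc #A * #B * (#A * #B) = (#A * #B) ^ 2 := (sq _).symm
      _ ≤ #(A + ξ • B) * (2 * (#A * #B)) := hCS.trans (Nat.mul_le_mul_left _ henergy)
      _ = 2 * #(A + ξ • B) * (#A * #B) := by ring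

end Pivot

section Field

variable {F : Type*} [Field F] [DecidableEq F]

lemma card_add_smul_le_of_mul_mem {A B S : Finset F} {δ ξ : F} (hδ : δ ≠ 0)
    (h : ∀ x ∈ A, ∀ y ∈ B, δ * (x + ξ * y) ∈ S) : #(A + ξ • B) ≤ #S := by
  rw [← card_smul_finset₀ hδ]
  refine card_le_card fun s hs => ?_
  obtain ⟨t, ht, rfl⟩ := mem_smul_finset.1 hs
  obtain ⟨x, hx, z, hz, rfl⟩ := mem_add.1 ht
  obtain ⟨y, hy, rfl⟩ := mem_smul_finset.1 hz
  exact h x hx y hy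

lemma exists_mul_eq_sub_of_mem_sub_div_sub {B : Finset F} (hB : B.Nontrivial) {r : F}
    (hr : r ∈ (B - B) / (B - B)) :
    ∃ a ∈ B, ∃ b ∈ B, ∃ c ∈ B, ∃ d ∈ B, c ≠ d ∧ (c - d) * r = a - b := by
  obtain ⟨s, hs, t, ht, rfl⟩ := mem_div.1 hr
  obtain ⟨a, ha, b, hb, rfl⟩ := mem_sub.1 hs
  obtain ⟨c, hc, d, hd, rfl⟩ := mem_sub.1 ht
  obtain rfl | hcd := eq_or_ne c d
  · obtain ⟨u, hu, v, hv, huv⟩ := hB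
    exact ⟨u, hu, u, hu, u, hu, v, hv, huv, by simp⟩
  · exact ⟨a, ha, b, hb, c, hc, d, hd, hcd, mul_div_cancel₀ _ (sub_ne_zero.2 hcd)⟩

lemma card_add_smul_of_notMem_sub_div_sub {B : Finset F} {r : F} (hr : r ∉ (B - B) / (B - B)) :
    #(B + r • B) = #B ^ 2 := by
  have hinj : Set.InjOn (fun q : F × F => q.1 + r * q.2) (B ×ˢ B : Finset (F × F)) := by
    rintro ⟨x, y⟩ hq ⟨x', y'⟩ hq' h
    obtain ⟨hx, hy⟩ := mem_product.1 hq
    obtain ⟨hx', hy'⟩ := mem_product.1 hq'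
    have h : x + r * y = x' + r * y' := h
    obtain rfl | hyy := eq_or_ne y y'
    · exact Prod.ext (add_right_cancel h) rfl
    · refine absurd (mem_div.2 ⟨x - x', sub_mem_sub hx hx', y' - y, sub_mem_sub hy' hy, ?_⟩) hr
      rw [div_eq_iff (sub_ne_zero.2 hyy.symm)]
      linear_combination h
  rw [← image_add_mul_product, card_image_of_injOn hinj, card_product, sq]

lemma add_add_sub_mem_three_nsmul_sub {X : Finset F} {x₁ x₂ x₃ y₁ y₂ y₃ : F}
    (hx₁ : x₁ ∈ X) (hx₂ : x₂ ∈ X) (hx₃ : x₃ ∈ X) (hy₁ : y₁ ∈ X) (hy₂ : y₂ ∈ X) (hy₃ : y₃ ∈ X) :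
    x₁ + x₂ + x₃ - (y₁ + y₂ + y₃) ∈ 3 • X - 3 • X := by
  have hX : 3 • X = X + X + X := by rw [succ_nsmul, two_nsmul]
  rw [hX]
  exact sub_mem_sub (add_mem_add (add_mem_add hx₁ hx₂) hx₃) (add_mem_add (add_mem_add hy₁ hy₂) hy₃)

lemma exists_mem_sub_div_sub_card_sq_le {B : Finset F} (hB : B.Nonempty)
    (hcast : (Set.Iio (#B ^ 2)).InjOn (Nat.cast : ℕ → F)) :
    ∃ r ∈ (B - B) / (B - B), #B ^ 2 ≤ 2 * #(B + r • B) ∨ #B ^ 2 ≤ 2 * #(B + (r + 1) • B) := by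
  -- If `(B - B) / (B - B)` is closed under `r ↦ r + 1`, it contains `0, …, #B ^ 2 - 1`, and a good
  -- `r` is found among these; if `r + 1` leaves it, all sums in `B + (r + 1) • B` differ.
  by_cases hsucc : ∀ r ∈ (B - B) / (B - B), r + 1 ∈ (B - B) / (B - B)
  · have hnat (n : ℕ) : (n : F) ∈ (B - B) / (B - B) := by
      induction n with
      | zero =>
        obtain ⟨b, hb⟩ := hB
        exact mem_div.2 ⟨b - b, sub_mem_sub hb hb, b - b, sub_mem_sub hb hb, by simp⟩
      | succ n ih => exact_mod_cast hsucc _ ih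
    let Ξ : Finset F := (range (#B ^ 2)).image Nat.cast
    have hΞ : #Ξ = #B ^ 2 := by
      rw [card_image_of_injOn (by rwa [coe_range]), card_range]
    have hΞne : Ξ.Nonempty := card_pos.1 (hΞ ▸ pow_pos hB.card_pos 2)
    obtain ⟨ξ, hξ, hcard⟩ :=
      exists_card_mul_card_le_two_mul_card_add_smul B B hΞne (by rw [hΞ, sq])
    obtain ⟨n, -, rfl⟩ := mem_image.1 hξ
    exact ⟨n, hnat n, Or.inl (by rwa [sq])⟩
  · push Not at hsucc
    obtain ⟨r, hr, hr1⟩ := hsucc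
    exact ⟨r, hr, Or.inr (by rw [card_add_smul_of_notMem_sub_div_sub hr1]; lia)⟩

lemma exists_subset_card_sq_le_card_three_nsmul_sub {B : Finset F}
    (hcast : (Set.Iio (#B ^ 2)).InjOn (Nat.cast : ℕ → F)) :
    ∃ N ⊆ B, #N ≤ 4 ∧ #B ^ 2 ≤ 2 * #(3 • (N * B) - 3 • (N * B)) := by
  rcases B.eq_empty_or_nonempty with rfl | hne
  · exact ⟨∅, empty_subset _, by simp⟩
  obtain ⟨u, rfl⟩ | hB := hne.exists_eq_singleton_or_nontrivial
  · exact ⟨{u}, Subset.rfl, by simp⟩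
  obtain ⟨r, hr, hcard⟩ := exists_mem_sub_div_sub_card_sq_le hne hcast
  obtain ⟨a, ha, b, hb, c, hc, d, hd, hcd, hr⟩ := exists_mul_eq_sub_of_mem_sub_div_sub hB hr
  have hδ : c - d ≠ 0 := sub_ne_zero.2 hcd
  let N : Finset F := {a, b, c, d}
  have hmul : ∀ t ∈ N, ∀ x ∈ B, t * x ∈ N * B := fun t ht x hx => mul_mem_mul ht hx
  simp only [N, mem_insert, mem_singleton, forall_eq_or_imp, forall_eq] at hmul
  obtain ⟨ha', hb', hc', hd'⟩ := hmul
  refine ⟨N, by simp [N, insert_subset_iff, *], card_le_four, ?_⟩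
  obtain hcard | hcard := hcard
  · refine hcard.trans (Nat.mul_le_mul_left 2 (card_add_smul_le_of_mul_mem hδ fun x hx y hy => ?_))
    have hsplit : (c - d) * (x + r * y) =
        c * x + a * y + c * x - (d * x + b * y + c * x) := by linear_combination y * hr
    rw [hsplit]
    exact add_add_sub_mem_three_nsmul_sub (hc' x hx) (ha' y hy) (hc' x hx) (hd' x hx) (hb' y hy)
      (hc' x hx)
  · refine hcard.trans (Nat.mul_le_mul_left 2 (card_add_smul_le_of_mul_mem hδ fun x hx y hy => ?_))
    have hsplit : (c - d) * (x + (r + 1) * y) =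
        c * x + a * y + c * y - (d * x + b * y + d * y) := by linear_combination y * hr
    rw [hsplit]
    exact add_add_sub_mem_three_nsmul_sub (hc' x hx) (ha' y hy) (hc' y hy) (hd' x hx) (hb' y hy)
      (hd' y hy)

end Field

lemma card_sub_mul_card_inter_le {G : Type*} [AddCommGroup G] [DecidableEq G] (X Y : Finset G) :
    #(X - Y) * #(X ∩ Y) ≤ #(X - X) * #(Y - Y) := by
  refine (ruzsa_triangle_inequality_sub_sub_sub X (X ∩ Y) Y).trans (Nat.mul_le_mul ?_ ?_)
  · exact card_le_card (sub_subset_sub_left inter_subset_left)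
  · exact card_le_card (sub_subset_sub_left inter_subset_right)

lemma card_nsmul_sub_nsmul_le_of_card_sub_le {G : Type*} [AddCommGroup G] [DecidableEq G]
    {Z X : Finset G} (hZ : Z.Nonempty) {K : ℝ} (hK : (#(Z - X) : ℝ) ≤ K * #Z) (m n : ℕ) :
    (#(m • X - n • X) : ℝ) ≤ K ^ (m + n) * #Z := by
  have hZ0 : (0 : ℝ) < #Z := by exact_mod_cast hZ.card_pos
  have h := NNRat.cast_le (K := ℝ) |>.2 (pluennecke_ruzsa_inequality_nsmul_sub_nsmul_sub hZ X m n)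
  push_cast at h
  refine h.trans ?_
  gcongr
  rwa [div_le_iff₀ hZ0]

lemma card_pow_div_pow_le_of_card_mul_le {G₀ : Type*} [CommGroupWithZero G₀] [DecidableEq G₀]
    {A : Finset G₀} (hA : A.Nonempty) (h0 : ∀ a ∈ A, a ≠ 0) {K : ℝ}
    (hK : (#(A * A) : ℝ) ≤ K * #A) (m n : ℕ) : (#(A ^ m / A ^ n) : ℝ) ≤ K ^ (m + n) * #A := by
  lift A to Finset G₀ˣ using fun a ha => (h0 a ha).isUnit
  have hmul : A.image Units.val * A.image Units.val = (A * A).image Units.val :=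
    (image_image₂_distrib Units.val_mul).symm
  have hdiv : A.image Units.val ^ m / A.image Units.val ^ n = (A ^ m / A ^ n).image Units.val := by
    have hpow (k : ℕ) : A.image Units.val ^ k = (A ^ k).image Units.val :=
      (image_pow (Units.coeHom G₀) A k).symm
    rw [hpow, hpow]
    exact (image_image₂_distrib Units.val_div_eq_div_val).symm
  have hinj : Function.Injective (Units.val : G₀ˣ → G₀) := Units.val_injective
  have hA0 : (0 : ℝ) < #A := by exact_mod_cast (image_nonempty.1 hA).card_pos
  rw [hmul, card_image_of_injective _ hinj, card_image_of_injective _ hinj, ← div_le_iff₀ hA0] at hK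
  rw [hdiv, card_image_of_injective _ hinj, card_image_of_injective _ hinj]
  have h := NNRat.cast_le (K := ℝ) |>.2
    (pluennecke_ruzsa_inequality_pow_div_pow_mul (image_nonempty.1 hA) A m n)
  push_cast at h
  exact h.trans (by gcongr)

section SumProduct

variable {F : Type*} [Field F] [DecidableEq F]

lemma card_smul_sub_smul_le {B : Finset F} {s t : F} (hs : s ≠ 0) (ht : t ≠ 0) (hB : B.Nonempty)
    {L M : ℝ} (hinter : (#B : ℝ) ≤ L * #(s • B ∩ t • B)) (hM : (#(B - B) : ℝ) ≤ M * #B) :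
    (#(s • B - t • B) : ℝ) ≤ L * M ^ 2 * #B := by
  have hB0 : (0 : ℝ) < #B := by exact_mod_cast hB.card_pos
  have hruzsa : (#(s • B - t • B) : ℝ) * #(s • B ∩ t • B) ≤ #(B - B) * #(B - B) := by
    have hsub (a : F) : a • B - a • B = a • (B - B) := (image_image₂_distrib (smul_sub a)).symm
    have h := card_sub_mul_card_inter_le (s • B) (t • B)
    rw [hsub, hsub, card_smul_finset₀ hs, card_smul_finset₀ ht] at h
    exact_mod_cast h
  have hL0 : 0 < L := pos_of_natCast_le_mul_natCast hB.card_pos hinter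
  refine le_of_mul_le_mul_right ?_ hB0
  calc (#(s • B - t • B) : ℝ) * #B ≤ #(s • B - t • B) * (L * #(s • B ∩ t • B)) := by gcongr
    _ = L * (#(s • B - t • B) * #(s • B ∩ t • B)) := by ring
    _ ≤ L * (M * #B * (M * #B)) := by
      refine mul_le_mul_of_nonneg_left (hruzsa.trans ?_) hL0.le
      exact mul_le_mul hM hM (Nat.cast_nonneg _) ((Nat.cast_nonneg _).trans hM)
    _ = L * M ^ 2 * #B * #B := by ring

lemma exists_subset_forall_card_smul_sub_smul_le {B : Finset F} (hB : B.Nonempty)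
    (h0 : ∀ b ∈ B, b ≠ 0) {L M : ℝ} (hL : (#(B * B) : ℝ) ≤ L * #B)
    (hM : (#(B - B) : ℝ) ≤ M * #B) :
    ∃ b₀ ∈ B, ∃ B₁ ⊆ B, (#B : ℝ) ≤ 2 * L * #B₁ ∧
      ∀ b ∈ B₁, (#(b₀ • B - b • B) : ℝ) ≤ 2 * L * M ^ 2 * #B := by
  have hbiUnion : B.biUnion (fun b => b • B) = B * B := biUnion_smul_finset B B
  obtain ⟨b₀, hb₀, B₁, hB₁, hcard, hinter⟩ :=
    exists_subset_forall_le_card_inter hB hB.card_pos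
      (fun b hb => card_smul_finset₀ (h0 b hb) B) (by rwa [hbiUnion])
  exact ⟨b₀, hb₀, B₁, hB₁, hcard, fun b hb =>
    card_smul_sub_smul_le (h0 b₀ hb₀) (h0 b (hB₁ hb)) hB (hinter b hb) hM⟩

lemma card_sub_mul_le_card_mul {Z N B : Finset F} {D : ℝ}
    (h : ∀ t ∈ N, (#(Z - t • B) : ℝ) ≤ D) : (#(Z - N * B) : ℝ) ≤ #N * D := by
  have hunion : Z - N * B = N.biUnion fun t => Z - t • B := by
    ext x
    simp only [mem_sub, mem_mul, mem_biUnion, mem_smul_finset, smul_eq_mul]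
    tauto
  calc (#(Z - N * B) : ℝ) ≤ ∑ t ∈ N, (#(Z - t • B) : ℝ) := by
        rw [hunion]
        exact_mod_cast card_biUnion_le
    _ ≤ #N * D := by simpa only [nsmul_eq_mul] using sum_le_card_nsmul _ _ _ h

theorem card_le_of_card_mul_le_of_card_sub_le {B : Finset F} (h0 : ∀ b ∈ B, b ≠ 0)
    (hcast : (Set.Iio (#B ^ 2)).InjOn (Nat.cast : ℕ → F)) {L M : ℝ}
    (hL : (#(B * B) : ℝ) ≤ L * #B) (hM : (#(B - B) : ℝ) ≤ M * #B) :
    (#B : ℝ) ≤ 8 * L ^ 2 * (8 * L * M ^ 2) ^ 6 := by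
  rcases B.eq_empty_or_nonempty with rfl | hB
  · simp only [card_empty, Nat.cast_zero]
    positivity
  have hB0 : (0 : ℝ) < #B := by exact_mod_cast hB.card_pos
  have hL0 : 0 < L := pos_of_natCast_le_mul_natCast (hB.mul hB).card_pos hL
  obtain ⟨b₀, hb₀, B₁, hB₁, hcard, hdilate⟩ :=
    exists_subset_forall_card_smul_sub_smul_le hB h0 hL hM
  obtain ⟨N, hN, hN4, hpivot⟩ := exists_subset_card_sq_le_card_three_nsmul_sub (B := B₁)
    (hcast.mono (Set.Iio_subset_Iio (Nat.pow_le_pow_left (card_le_card hB₁) 2)))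
  have hb₀B : #(b₀ • B) = #B := card_smul_finset₀ (h0 b₀ hb₀) B
  have hNB : (#(b₀ • B - N * B₁) : ℝ) ≤ 8 * L * M ^ 2 * #(b₀ • B) := by
    calc (#(b₀ • B - N * B₁) : ℝ) ≤ #(b₀ • B - N * B) := by
          exact_mod_cast card_le_card (sub_subset_sub_left (mul_subset_mul_left hB₁))
      _ ≤ #N * (2 * L * M ^ 2 * #B) := card_sub_mul_le_card_mul fun t ht => hdilate t (hN ht)
      _ ≤ 4 * (2 * L * M ^ 2 * #B) := by
          gcongr
          exact_mod_cast hN4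
      _ = 8 * L * M ^ 2 * #(b₀ • B) := by rw [hb₀B]; ring
  have hpluennecke := card_nsmul_sub_nsmul_le_of_card_sub_le hB.smul_finset hNB 3 3
  rw [hb₀B] at hpluennecke
  refine le_of_mul_le_mul_right ?_ hB0
  calc (#B : ℝ) * #B ≤ 2 * L * #B₁ * (2 * L * #B₁) := by gcongr
    _ = 4 * L ^ 2 * (#B₁ ^ 2 : ℕ) := by push_cast; ring
    _ ≤ 4 * L ^ 2 * (2 * #(3 • (N * B₁) - 3 • (N * B₁)) : ℕ) := by gcongr
    _ ≤ 4 * L ^ 2 * (2 * ((8 * L * M ^ 2) ^ 6 * #B)) := by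
      push_cast
      gcongr
    _ = 8 * L ^ 2 * (8 * L * M ^ 2) ^ 6 * #B := by ring

end SumProduct

section Refinement

lemma exists_subset_forall_le_card_common_neighbors {α : Type*} [DecidableEq α] {Y : Finset α}
    {E : Finset (α × α)} (hE : E ⊆ Y ×ˢ Y) (hcard : 7 * #Y ^ 2 ≤ 8 * #E) :
    ∃ Y' ⊆ Y, #Y ≤ 2 * #Y' ∧
      ∀ y ∈ Y', ∀ z ∈ Y', #Y ≤ 2 * #{w ∈ Y | (y, w) ∈ E ∧ (z, w) ∈ E} := by
  rcases Y.eq_empty_or_nonempty with rfl | hY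
  · exact ⟨∅, Subset.rfl, by simp⟩
  let nbhd (y : α) : Finset α := {w ∈ Y | (y, w) ∈ E}
  let Y' : Finset α := {y ∈ Y | 3 / 4 * (#Y : ℝ) ≤ #(nbhd y)}
  have hsum : ∑ y ∈ Y, (#(nbhd y) : ℝ) = #E := by
    rw [← Nat.cast_sum, ← inter_eq_right.2 hE, ← filter_mem_eq_inter]
    simp only [nbhd, card_filter, sum_product]
  have hpop : (#E : ℝ) ≤ #Y * (3 / 4 * #Y) + #Y' * (#Y - 3 / 4 * #Y) := by
    rw [← hsum]
    refine sum_le_card_mul_add_card_filter_mul Y _ fun y _ => ?_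
    exact_mod_cast card_filter_le _ _
  refine ⟨Y', filter_subset _ _, ?_, fun y hy z hz => ?_⟩
  · have hcardE : 7 * (#Y : ℝ) ^ 2 ≤ 8 * #E := by exact_mod_cast hcard
    have hY'Y : (#Y : ℝ) ≤ 2 * #Y' := by
      refine le_of_mul_le_mul_right (a := (#Y : ℝ)) ?_ (by positivity)
      linarith
    exact_mod_cast hY'Y
  · have hunion : #(nbhd y ∪ nbhd z) ≤ #Y :=
      card_le_card (union_subset (filter_subset _ _) (filter_subset _ _))
    have hinter := card_union_add_card_inter (nbhd y) (nbhd z)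
    rw [← filter_and] at hinter
    have hy := (mem_filter.1 hy).2
    have hz := (mem_filter.1 hz).2
    have hcommon : (#Y : ℝ) ≤ 2 * #{w ∈ Y | (y, w) ∈ E ∧ (z, w) ∈ E} := by
      have hunion : (#(nbhd y ∪ nbhd z) : ℝ) ≤ #Y := by exact_mod_cast hunion
      have hinter : (#(nbhd y ∪ nbhd z) + #{w ∈ Y | (y, w) ∈ E ∧ (z, w) ∈ E} : ℝ) =
        #(nbhd y) + #(nbhd z) := by exact_mod_cast hinter
      linarith
    exact_mod_cast hcommon

lemma exists_subset_card_sub_mul_card_le {G : Type*} [AddCommGroup G] [DecidableEq G]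
    {Y : Finset G} {E : Finset (G × G)} (hE : E ⊆ Y ×ˢ Y) (hcard : 7 * #Y ^ 2 ≤ 8 * #E) :
    ∃ Y' ⊆ Y, #Y ≤ 2 * #Y' ∧
      #(Y' - Y') * #Y ≤ 2 * #(E.image fun q => q.1 - q.2) ^ 2 := by
  obtain ⟨Y', hY', hYY', hcommon⟩ := exists_subset_forall_le_card_common_neighbors hE hcard
  refine ⟨Y', hY', hYY', ?_⟩
  let D : Finset G := E.image fun q => q.1 - q.2
  have hfiber : ∀ d ∈ Y' - Y', (#Y / 2 : ℝ) ≤ #{q ∈ D ×ˢ D | q.1 - q.2 = d} := by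
    intro d hd
    obtain ⟨y, hy, z, hz, rfl⟩ := mem_sub.1 hd
    have hinj : #{w ∈ Y | (y, w) ∈ E ∧ (z, w) ∈ E} ≤ #{q ∈ D ×ˢ D | q.1 - q.2 = y - z} := by
      refine card_le_card_of_injOn (fun w => (y - w, z - w)) (fun w hw => ?_) fun w _ w' _ h => ?_
      · obtain ⟨-, hyw, hzw⟩ := mem_filter.1 hw
        exact mem_filter.2 ⟨mem_product.2 ⟨mem_image_of_mem (fun q : G × G => q.1 - q.2) hyw,
          mem_image_of_mem (fun q : G × G => q.1 - q.2) hzw⟩, sub_sub_sub_cancel_right _ _ _⟩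
      · exact sub_right_injective (congrArg Prod.fst h)
    rw [div_le_iff₀' two_pos]
    exact_mod_cast (hcommon y hy z hz).trans (Nat.mul_le_mul_left 2 hinj)
  have h := card_mul_le_card_of_le_card_fiber _ _ _ hfiber
  rw [card_product, mul_div_assoc', div_le_iff₀' two_pos] at h
  rw [sq]
  exact_mod_cast h

variable {F : Type*} [Field F] [DecidableEq F]

-- If `a / b = y / z`, then `y(a + x₀)/a - z(b + x₀)/b = y - z`.
lemma card_filter_div_eq_le_card_filter_sub_eq {Y S : Finset F} (h0 : ∀ y ∈ Y, y ≠ 0) {x₀ : F}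
    (hx₀ : x₀ ≠ 0) (hS : ∀ a ∈ Y, ∀ y ∈ Y, y * (a + x₀) / a ∈ S) {y z : F} (hy : y ∈ Y)
    (hz : z ∈ Y) :
    #{q ∈ Y ×ˢ Y | q.1 / q.2 = y / z} ≤ #{s ∈ S ×ˢ S | s.1 - s.2 = y - z} := by
  have hinj {u a b : F} (hu : u ∈ Y) (ha : a ∈ Y) (hb : b ∈ Y)
      (h : u * (a + x₀) / a = u * (b + x₀) / b) : a = b := by
    rw [div_eq_div_iff (h0 a ha) (h0 b hb)] at h
    refine mul_left_cancel₀ (mul_ne_zero (h0 u hu) hx₀) ?_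
    linear_combination -h
  refine card_le_card_of_injOn (fun q => (y * (q.1 + x₀) / q.1, z * (q.2 + x₀) / q.2)) ?_ ?_
  · rintro ⟨a, b⟩ hab
    obtain ⟨hab, hdiv⟩ := mem_filter.1 hab
    obtain ⟨ha, hb⟩ := mem_product.1 hab
    refine mem_filter.2 ⟨mem_product.2 ⟨hS a ha y hy, hS b hb z hz⟩, ?_⟩
    have ha0 := h0 a ha
    have hb0 := h0 b hb
    rw [div_eq_div_iff hb0 (h0 z hz)] at hdiv
    field_simp
    linear_combination -x₀ * hdiv
  · rintro ⟨a, b⟩ hab ⟨a', b'⟩ hab' h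
    obtain ⟨ha, hb⟩ := mem_product.1 (mem_filter.1 hab).1
    obtain ⟨ha', hb'⟩ := mem_product.1 (mem_filter.1 hab').1
    exact Prod.ext (hinj hy ha ha' (congrArg Prod.fst h)) (hinj hz hb hb' (congrArg Prod.snd h))

lemma exists_subset_card_sub_mul_card_pow_le {Y S : Finset F} (h0 : ∀ y ∈ Y, y ≠ 0) {x₀ : F}
    (hx₀ : x₀ ≠ 0) (hS : ∀ a ∈ Y, ∀ y ∈ Y, y * (a + x₀) / a ∈ S) :
    ∃ Y' ⊆ Y, #Y ≤ 2 * #Y' ∧ #(Y' - Y') * #Y ^ 5 ≤ 128 * #S ^ 4 * #(Y / Y) ^ 2 := by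
  rcases Y.eq_empty_or_nonempty with rfl | hY
  · exact ⟨∅, Subset.rfl, by simp⟩
  have hQ : (Y / Y).Nonempty := hY.div hY
  let τ : ℝ := #Y ^ 2 / (8 * #(Y / Y))
  let E : Finset (F × F) := {q ∈ Y ×ˢ Y | τ ≤ #{q' ∈ Y ×ˢ Y | q'.1 / q'.2 = q.1 / q.2}}
  have hE : 7 * #Y ^ 2 ≤ 8 * #E := by
    have hτ : #(Y / Y) * τ = #Y ^ 2 / 8 := by
      simp only [τ]
      field_simp
    have h := card_le_card_image_mul_add_card_filter_le_card_fiber (Y ×ˢ Y) (fun q => q.1 / q.2)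
      (τ := τ) (by positivity)
    rw [image_div_product, hτ, card_product, Nat.cast_mul] at h
    have hE : 7 * (#Y : ℝ) ^ 2 ≤ 8 * #E := by linarith
    exact_mod_cast hE
  obtain ⟨Y', hY', hYY', hdiff⟩ := exists_subset_card_sub_mul_card_le (filter_subset _ _) hE
  refine ⟨Y', hY', hYY', ?_⟩
  let D : Finset F := E.image fun q => q.1 - q.2
  have hD : #D * τ ≤ #(S ×ˢ S) := by
    refine card_mul_le_card_of_le_card_fiber _ D (fun s => s.1 - s.2) fun d hd => ?_
    obtain ⟨q, hq, rfl⟩ := mem_image.1 hd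
    obtain ⟨hq, hτ⟩ := mem_filter.1 hq
    obtain ⟨hy, hz⟩ := mem_product.1 hq
    refine hτ.trans ?_
    exact_mod_cast card_filter_div_eq_le_card_filter_sub_eq h0 hx₀ hS hy hz
  have hD : #D * #Y ^ 2 ≤ 8 * #(Y / Y) * #S ^ 2 := by
    rw [mul_div_assoc', div_le_iff₀ (by positivity), card_product,
      Nat.cast_mul] at hD
    have hD : (#D * #Y ^ 2 : ℝ) ≤ 8 * #(Y / Y) * #S ^ 2 := by linarith
    exact_mod_cast hD
  calc #(Y' - Y') * #Y ^ 5 = #(Y' - Y') * #Y * #Y ^ 4 := by ring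
    _ ≤ 2 * #D ^ 2 * #Y ^ 4 := by gcongr
    _ = 2 * (#D * #Y ^ 2) ^ 2 := by ring
    _ ≤ 2 * (8 * #(Y / Y) * #S ^ 2) ^ 2 := by gcongr
    _ = 128 * #S ^ 4 * #(Y / Y) ^ 2 := by ring

end Refinement

section Extraction

lemma card_sq_le_two_mul_card_filter_add_ne_zero {G : Type*} [AddGroup G] [DecidableEq G]
    {A : Finset G} (hA : 1 < #A) : #A ^ 2 ≤ 2 * #{q ∈ A ×ˢ A | q.1 + q.2 ≠ 0} := by
  have hzero : #{q ∈ A ×ˢ A | ¬ q.1 + q.2 ≠ 0} ≤ #A := by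
    refine card_le_card_of_injOn Prod.fst (fun q hq => (mem_product.1 (mem_filter.1 hq).1).1) ?_
    rintro ⟨x, y⟩ hq ⟨x', y'⟩ hq' rfl
    have hy := not_not.1 (mem_filter.1 hq).2
    have hy' := not_not.1 (mem_filter.1 hq').2
    exact Prod.ext rfl (add_left_cancel (hy.trans hy'.symm))
  have hsplit := card_filter_add_card_filter_not (s := A ×ˢ A) fun q => q.1 + q.2 ≠ 0
  rw [card_product] at hsplit
  have h2 : 2 * #A ≤ #A ^ 2 := by rw [sq]; exact Nat.mul_le_mul_right _ hA
  lia

/-- The coincidences `f x y = f z t` between pairs `(x, y)`, `(z, t)` of elements of `A`, encoded as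
`((x, y), (z, t))`. Pairs with `x + y = 0` are left out, because `xy(x + y)` vanishes on all of
them. -/
def collisions {G β : Type*} [AddGroup G] [DecidableEq G] [DecidableEq β] (f : G → G → β)
    (A : Finset G) : Finset ((G × G) × (G × G)) :=
  {q ∈ {r ∈ A ×ˢ A | r.1 + r.2 ≠ 0} ×ˢ {r ∈ A ×ˢ A | r.1 + r.2 ≠ 0} |
    f q.1.1 q.1.2 = f q.2.1 q.2.2}

lemma mem_collisions {G β : Type*} [AddGroup G] [DecidableEq G] [DecidableEq β] {f : G → G → β}
    {A : Finset G} {q : (G × G) × (G × G)} :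
    q ∈ collisions f A ↔ ((q.1.1 ∈ A ∧ q.1.2 ∈ A) ∧ q.1.1 + q.1.2 ≠ 0) ∧
      ((q.2.1 ∈ A ∧ q.2.2 ∈ A) ∧ q.2.1 + q.2.2 ≠ 0) ∧ f q.1.1 q.1.2 = f q.2.1 q.2.2 := by
  simp only [collisions, mem_filter, mem_product, and_assoc]

lemma card_pow_three_le_mul_card_collisions {G β : Type*} [AddGroup G] [DecidableEq G]
    [DecidableEq β] {A : Finset G} (hA : 1 < #A) (f : G → G → β) {K : ℝ}
    (hK : (#(image₂ f A A) : ℝ) ≤ K * #A) :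
    (#A : ℝ) ^ 3 ≤ 4 * K * #(collisions f A) := by
  let P : Finset (G × G) := {r ∈ A ×ˢ A | r.1 + r.2 ≠ 0}
  have hA0 : (0 : ℝ) < #A := by exact_mod_cast zero_lt_one.trans hA
  have hP : (#A : ℝ) ^ 2 ≤ 2 * #P := by
    exact_mod_cast card_sq_le_two_mul_card_filter_add_ne_zero hA
  have hcoll : (#P : ℝ) ^ 2 ≤ #(image₂ f A A) * #(collisions f A) := by
    exact_mod_cast (card_sq_le_card_image_mul_card_filter_eq P fun r => f r.1 r.2).trans
      (Nat.mul_le_mul_right _ (card_le_card (image_subset_image (filter_subset _ _))))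
  refine le_of_mul_le_mul_right ?_ hA0
  calc (#A : ℝ) ^ 3 * #A = ((#A : ℝ) ^ 2) ^ 2 := by ring
    _ ≤ (2 * #P : ℝ) ^ 2 := by gcongr
    _ = 4 * (#P : ℝ) ^ 2 := by ring
    _ ≤ 4 * (#(image₂ f A A) * #(collisions f A) : ℝ) := by gcongr
    _ ≤ 4 * (K * #A * #(collisions f A)) := by gcongr
    _ = 4 * K * #(collisions f A) * #A := by ring

variable {F : Type*} [Field F] [DecidableEq F]

lemma card_filter_eq_pow_mul_le (A : Finset F) {c : F} (hc : c ≠ 0) (w : F) {n : ℕ} (hn : 0 < n) :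
    #{x ∈ A | c = x ^ n * w} ≤ n := by
  refine (card_le_card fun x hx => ?_).trans
    ((Multiset.toFinset_card_le _).trans (Polynomial.card_nthRoots n (c / w)))
  have hx := (mem_filter.1 hx).2
  rw [Multiset.mem_toFinset, Polynomial.mem_nthRoots hn,
    eq_div_iff (right_ne_zero_of_mul (hx ▸ hc)), hx]

lemma card_filter_ne_zero_and_eq_pow_mul_le (A B : Finset F) (g : F → F) (w : F) {n : ℕ}
    (hn : 0 < n) :
    #{t ∈ A ×ˢ B | g t.1 ≠ 0 ∧ g t.1 = t.2 ^ n * w} ≤ n * #{y ∈ A | ∃ x ∈ B, g y = x ^ n * w} := by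
  refine card_le_mul_card_image_of_maps_to (f := Prod.fst) (fun t ht => ?_) n fun y hy => ?_
  · obtain ⟨htAB, -, ht⟩ := mem_filter.1 ht
    obtain ⟨ht₁, ht₂⟩ := mem_product.1 htAB
    exact mem_filter.2 ⟨ht₁, t.2, ht₂, ht⟩
  · obtain hy0 | hy0 := eq_or_ne (g y) 0
    · rw [filter_false_of_mem, card_empty]
      · exact Nat.zero_le n
      · rintro t ht rfl
        exact (mem_filter.1 ht).2.1 hy0
    · refine le_trans (card_le_card_of_injOn Prod.snd (fun t ht => ?_) ?_)
        (card_filter_eq_pow_mul_le B hy0 w hn)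
      · obtain ⟨htAB, rfl⟩ := mem_filter.1 ht
        obtain ⟨htAB, -, hpow⟩ := mem_filter.1 htAB
        exact mem_filter.2 ⟨(mem_product.1 htAB).2, hpow⟩
      · rintro t ht t' ht' h
        exact Prod.ext ((mem_filter.1 ht).2.trans (mem_filter.1 ht').2.symm) h

lemma exists_card_le_mul_card_filter_collisions {β : Type*} [DecidableEq β] {A : Finset F}
    (hA : 1 < #A) (h0 : ∀ a ∈ A, a ≠ 0) (f : F → F → β) {K : ℝ} (hmul : (#(A * A) : ℝ) ≤ K * #A)
    (himage : (#(image₂ f A A) : ℝ) ≤ K * #A) :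
    ∃ x₀ ∈ A, ∃ u : F,
      (#A : ℝ) ≤ 4 * K ^ 3 * #{q ∈ collisions f A | q.1.1 = x₀ ∧ q.2.2 / q.2.1 = u} := by
  have hAne : A.Nonempty := card_pos.1 (zero_lt_one.trans hA)
  have hK0 : 0 < K := pos_of_natCast_le_mul_natCast (hAne.mul hAne).card_pos hmul
  have hdiv : (#(A / A) : ℝ) ≤ K ^ 2 * #A := by
    simpa only [pow_one] using card_pow_div_pow_le_of_card_mul_le hAne h0 hmul 1 1
  have hmaps (q) (hq : q ∈ collisions f A) : (q.1.1, q.2.2 / q.2.1) ∈ A ×ˢ (A / A) := by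
    obtain ⟨⟨⟨hx, -⟩, -⟩, ⟨⟨hz, ht⟩, -⟩, -⟩ := mem_collisions.1 hq
    exact mem_product.2 ⟨hx, div_mem_div ht hz⟩
  have hcard : #(A ×ˢ (A / A)) • (#A / (4 * K ^ 3) : ℝ) ≤ #(collisions f A) := by
    rw [card_product, nsmul_eq_mul, Nat.cast_mul]
    calc (#A * #(A / A) : ℝ) * (#A / (4 * K ^ 3)) ≤ #A * (K ^ 2 * #A) * (#A / (4 * K ^ 3)) := by
          gcongr
      _ = #A ^ 3 / (4 * K) := by field_simp
      _ ≤ #(collisions f A) := by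
          rw [div_le_iff₀' (by positivity)]
          exact card_pow_three_le_mul_card_collisions hA f himage
  obtain ⟨⟨x₀, u⟩, hxu, hfiber⟩ := exists_le_card_fiber_of_nsmul_le_card_of_maps_to hmaps
    (hAne.product (hAne.div hAne)) hcard
  rw [div_le_iff₀' (by positivity)] at hfiber
  simp only [Prod.mk.injEq] at hfiber
  exact ⟨x₀, (mem_product.1 hxu).1, u, hfiber⟩

-- `t = uz` turns `xy(x + y) = zt(z + t)` into `xy(x + y) = z³u(1 + u)`.
lemma card_filter_collisions_le {A : Finset F} (h0 : ∀ a ∈ A, a ≠ 0) (x₀ u : F) :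
    #{q ∈ collisions (fun x y => x * y * (x + y)) A | q.1.1 = x₀ ∧ q.2.2 / q.2.1 = u} ≤
      #{t ∈ A ×ˢ A | x₀ * t.1 * (x₀ + t.1) ≠ 0 ∧
        x₀ * t.1 * (x₀ + t.1) = t.2 ^ 3 * (u * (1 + u))} := by
  refine card_le_card_of_injOn (fun q => (q.1.2, q.2.1)) ?_ ?_
  · rintro ⟨⟨x, y⟩, z, t⟩ hq
    obtain ⟨hcoll, rfl, rfl⟩ := mem_filter.1 hq
    obtain ⟨⟨⟨hx, hy⟩, hxy⟩, ⟨⟨hz, -⟩, -⟩, heq⟩ := mem_collisions.1 hcoll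
    refine mem_filter.2 ⟨mem_product.2 ⟨hy, hz⟩,
      mul_ne_zero (mul_ne_zero (h0 _ hx) (h0 _ hy)) hxy, heq.trans ?_⟩
    have hz0 : z ≠ 0 := h0 z hz
    field_simp
  · rintro ⟨⟨x, y⟩, z, t⟩ hq ⟨⟨x', y'⟩, z', t'⟩ hq' h
    obtain ⟨hcoll, rfl, rfl⟩ := mem_filter.1 hq
    obtain ⟨-, hx', hu'⟩ := mem_filter.1 hq'
    obtain ⟨-, ⟨⟨hz, -⟩, -⟩, -⟩ := mem_collisions.1 hcoll
    obtain ⟨hy, hz'⟩ := Prod.mk.inj h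
    simp only at hx' hu' hy hz'
    subst hx' hy hz'
    rw [(div_left_inj' (h0 _ hz)).1 hu']

lemma exists_card_le_mul_card_filter_eq_cube_mul {A : Finset F} (hA : 1 < #A)
    (h0 : ∀ a ∈ A, a ≠ 0) {K : ℝ} (hmul : (#(A * A) : ℝ) ≤ K * #A)
    (himage : (#(image₂ (fun x y => x * y * (x + y)) A A) : ℝ) ≤ K * #A) :
    ∃ x₀ ∈ A, ∃ w : F, (#A : ℝ) ≤
      12 * K ^ 3 * #{y ∈ A | ∃ x ∈ A, x₀ * y * (x₀ + y) = x ^ 3 * w} := by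
  have hAne : A.Nonempty := card_pos.1 (zero_lt_one.trans hA)
  have hK0 : 0 < K := pos_of_natCast_le_mul_natCast (hAne.mul hAne).card_pos hmul
  obtain ⟨x₀, hx₀, u, hu⟩ := exists_card_le_mul_card_filter_collisions hA h0 _ hmul himage
  have hcubes := (card_filter_collisions_le h0 x₀ u).trans (card_filter_ne_zero_and_eq_pow_mul_le
    A A (fun y => x₀ * y * (x₀ + y)) (u * (1 + u)) three_pos)
  refine ⟨x₀, hx₀, u * (1 + u), ?_⟩
  calc (#A : ℝ) ≤ 4 * K ^ 3 * _ := hu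
    _ ≤ 4 * K ^ 3 * (3 * #{y ∈ A | ∃ x ∈ A, x₀ * y * (x₀ + y) = x ^ 3 * (u * (1 + u))} : ℕ) := by
      gcongr
    _ = _ := by push_cast; ring

end Extraction

section MainBound

variable {F : Type*} [Field F] [DecidableEq F]

lemma mul_add_div_mem_smul_pow_div_pow {A : Finset F} {a x y x₀ w : F} (ha0 : a ≠ 0)
    (hx₀ : x₀ ≠ 0) (ha : a ∈ A) (hx : x ∈ A) (hy : y ∈ A) (h : x₀ * a * (x₀ + a) = x ^ 3 * w) :
    y * (a + x₀) / a ∈ (w / x₀) • (A ^ 4 / A ^ 2) := by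
  refine mem_smul_finset.2 ⟨x ^ 3 * y / a ^ 2, div_mem_div ?_ (pow_mem_pow ha), ?_⟩
  · exact pow_succ A 3 ▸ mul_mem_mul (pow_mem_pow hx) hy
  · rw [smul_eq_mul]
    field_simp
    linear_combination -y * h

lemma exists_subset_card_le_and_card_sub_le {A : Finset F} (hA : 1 < #A) (h0 : ∀ a ∈ A, a ≠ 0)
    {K : ℝ} (hmul : (#(A * A) : ℝ) ≤ K * #A)
    (himage : (#(image₂ (fun x y => x * y * (x + y)) A A) : ℝ) ≤ K * #A) :
    ∃ B ⊆ A, (#A : ℝ) ≤ 24 * K ^ 3 * #B ∧ (#(B - B) : ℝ) ≤ 2 ^ 7 * 12 ^ 5 * K ^ 43 * #A := by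
  have hAne : A.Nonempty := card_pos.1 (zero_lt_one.trans hA)
  have hA0 : (0 : ℝ) < #A := by exact_mod_cast hAne.card_pos
  have hK0 : 0 < K := pos_of_natCast_le_mul_natCast (hAne.mul hAne).card_pos hmul
  obtain ⟨x₀, hx₀, w, hY⟩ := exists_card_le_mul_card_filter_eq_cube_mul hA h0 hmul himage
  set Y : Finset F := {y ∈ A | ∃ x ∈ A, x₀ * y * (x₀ + y) = x ^ 3 * w}
  have hYA : Y ⊆ A := filter_subset _ _
  let S : Finset F := (w / x₀) • (A ^ 4 / A ^ 2)
  have hS : ∀ a ∈ Y, ∀ y ∈ Y, y * (a + x₀) / a ∈ S := by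
    intro a ha y hy
    obtain ⟨haA, x, hx, hax⟩ := mem_filter.1 ha
    exact mul_add_div_mem_smul_pow_div_pow (h0 a haA) (h0 x₀ hx₀) haA hx (hYA hy) hax
  have hScard : (#S : ℝ) ≤ K ^ 6 * #A :=
    (Nat.cast_le.2 card_image_le).trans (card_pow_div_pow_le_of_card_mul_le hAne h0 hmul 4 2)
  have hdiv : (#(Y / Y) : ℝ) ≤ K ^ 2 * #A := by
    refine (Nat.cast_le.2 (card_le_card (div_subset_div hYA hYA))).trans ?_
    simpa only [pow_one] using card_pow_div_pow_le_of_card_mul_le hAne h0 hmul 1 1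
  obtain ⟨B, hBY, hYB, hdiff⟩ :=
    exists_subset_card_sub_mul_card_pow_le (fun y hy => h0 y (hYA hy)) (h0 x₀ hx₀) hS
  have hYB : (#Y : ℝ) ≤ 2 * #B := by exact_mod_cast hYB
  have hdiff : (#(B - B) * #Y ^ 5 : ℝ) ≤ 128 * #S ^ 4 * #(Y / Y) ^ 2 := by exact_mod_cast hdiff
  refine ⟨B, hBY.trans hYA, ?_, le_of_mul_le_mul_right ?_ (pow_pos hA0 5)⟩
  · calc (#A : ℝ) ≤ 12 * K ^ 3 * #Y := hY
      _ ≤ 12 * K ^ 3 * (2 * #B) := by gcongr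
      _ = 24 * K ^ 3 * #B := by ring
  · calc (#(B - B) : ℝ) * #A ^ 5 ≤ #(B - B) * (12 * K ^ 3 * #Y) ^ 5 := by gcongr
      _ = 12 ^ 5 * K ^ 15 * (#(B - B) * #Y ^ 5) := by ring
      _ ≤ 12 ^ 5 * K ^ 15 * (128 * #S ^ 4 * #(Y / Y) ^ 2) := by gcongr
      _ ≤ 12 ^ 5 * K ^ 15 * (128 * (K ^ 6 * #A) ^ 4 * (K ^ 2 * #A) ^ 2) := by gcongr
      _ = 2 ^ 7 * 12 ^ 5 * K ^ 43 * #A * #A ^ 5 := by ring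

theorem card_le_of_card_mul_le_of_card_image₂_le {A : Finset F} (h0 : ∀ a ∈ A, a ≠ 0)
    (hcast : (Set.Iio (#A ^ 2)).InjOn (Nat.cast : ℕ → F)) {K : ℝ} (hK : 1 ≤ K)
    (hmul : (#(A * A) : ℝ) ≤ K * #A)
    (himage : (#(image₂ (fun x y => x * y * (x + y)) A A) : ℝ) ≤ K * #A) :
    (#A : ℝ) ≤ (2 * K) ^ 587 := by
  obtain hA | hA := le_or_gt #A 1
  · exact (Nat.cast_le_one.2 hA).trans (one_le_pow₀ (by linarith))
  obtain ⟨B, hBA, hAB, hdiff⟩ := exists_subset_card_le_and_card_sub_le hA h0 hmul himage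
  have hBcard : #B ≤ #A := card_le_card hBA
  have hcast : (Set.Iio (#B ^ 2)).InjOn (Nat.cast : ℕ → F) :=
    hcast.mono (Set.Iio_subset_Iio (by gcongr))
  have hAB : (#A : ℝ) ≤ 2 ^ 5 * K ^ 3 * #B := hAB.trans (by gcongr; norm_num)
  have hL : (#(B * B) : ℝ) ≤ 2 ^ 5 * K ^ 4 * #B := by
    calc (#(B * B) : ℝ) ≤ #(A * A) := Nat.cast_le.2 (card_le_card (mul_subset_mul hBA hBA))
      _ ≤ K * #A := hmul
      _ ≤ K * (2 ^ 5 * K ^ 3 * #B) := by gcongr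
      _ = 2 ^ 5 * K ^ 4 * #B := by ring
  have hM : (#(B - B) : ℝ) ≤ 2 ^ 32 * K ^ 46 * #B := by
    calc (#(B - B) : ℝ) ≤ 2 ^ 7 * 12 ^ 5 * K ^ 43 * #A := hdiff
      _ ≤ 2 ^ 27 * K ^ 43 * (2 ^ 5 * K ^ 3 * #B) := by gcongr; norm_num
      _ = 2 ^ 32 * K ^ 46 * #B := by ring
  have hB := card_le_of_card_mul_le_of_card_sub_le (fun b hb => h0 b (hBA hb)) hcast hL hM
  calc (#A : ℝ) ≤ 2 ^ 5 * K ^ 3 *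
          (8 * (2 ^ 5 * K ^ 4) ^ 2 * (8 * (2 ^ 5 * K ^ 4) * (2 ^ 32 * K ^ 46) ^ 2) ^ 6) :=
        hAB.trans (by gcongr)
    _ = 2 ^ 18 * (2 ^ 72) ^ 6 * K ^ 587 := by ring
    _ ≤ 2 ^ 11 * (2 ^ 96) ^ 6 * K ^ 587 := by gcongr ?_ * _; norm_num
    _ = (2 * K) ^ 587 := by rw [mul_pow, ← pow_mul, ← pow_add]

end MainBound

lemma natCast_rpow_le_rpow (n : ℕ) {s t : ℝ} (hs : 0 < s) (hst : s ≤ t) :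
    (n : ℝ) ^ s ≤ (n : ℝ) ^ t := by
  obtain rfl | hn := n.eq_zero_or_pos
  · rw [Nat.cast_zero, Real.zero_rpow hs.ne', Real.zero_rpow (hs.trans_le hst).ne']
  · exact Real.rpow_le_rpow_of_exponent_le (by exact_mod_cast hn) hst

lemma sq_le_of_natCast_le_rpow {m n : ℕ} {s : ℝ} (hs : 0 < s) (hs' : s ≤ 1 / 2)
    (h : (m : ℝ) ≤ (n : ℝ) ^ s) : m ^ 2 ≤ n := by
  have hsqrt : (m : ℝ) ≤ √n := by
    rw [Real.sqrt_eq_rpow]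
    exact h.trans (natCast_rpow_le_rpow n hs hs')
  exact_mod_cast (Real.le_sqrt (Nat.cast_nonneg _) (Nat.cast_nonneg _)).1 hsqrt

theorem stmt_15_general {F : Type*} [Field F] [DecidableEq F] {A : Finset F}
    (h0 : ∀ a ∈ A, a ≠ 0) (hchar : ringChar F = 0 ∨ #A ^ 2 ≤ ringChar F) :
    (#A : ℝ) ^ (1 + 1 / 587 : ℝ) / 2 ≤
      max (#(image₂ (fun x y => x * y * (x + y)) A A) : ℝ) #(A * A) := by
  obtain rfl | hA := A.eq_empty_or_nonempty
  · simp [Real.zero_rpow (by norm_num : (1 + 587⁻¹ : ℝ) ≠ 0)]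
  set N : ℝ := max (#(image₂ (fun x y => x * y * (x + y)) A A) : ℝ) #(A * A)
  have hA0 : (0 : ℝ) < #A := by exact_mod_cast hA.card_pos
  have hcast : (Set.Iio (#A ^ 2)).InjOn (Nat.cast : ℕ → F) := by
    obtain hzero | hle := hchar
    · have := (CharP.ringChar_zero_iff_CharZero F).1 hzero
      exact Nat.cast_injective.injOn
    · exact (CharP.natCast_injOn_Iio F (ringChar F)).mono (Set.Iio_subset_Iio hle)
  have hK : 1 ≤ N / #A := by
    obtain ⟨a, ha⟩ := hA
    rw [one_le_div hA0]
    refine (Nat.cast_le.2 ?_).trans (le_max_right _ _)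
    exact card_le_card_mul_left_of_injective ha (mul_right_injective₀ (h0 a ha))
  have hbound : (#A : ℝ) ≤ (2 * (N / #A)) ^ 587 := by
    refine card_le_of_card_mul_le_of_card_image₂_le h0 hcast hK ?_ ?_ <;>
      rw [div_mul_cancel₀ _ hA0.ne']
    exacts [le_max_right _ _, le_max_left _ _]
  have hroot : (#A : ℝ) ^ (1 / 587 : ℝ) ≤ 2 * (N / #A) := by
    have h : ((2 * (N / #A)) ^ 587) ^ (1 / 587 : ℝ) = 2 * (N / #A) := by
      rw [one_div]
      exact_mod_cast Real.pow_rpow_inv_natCast (by linarith) (by norm_num : (587 : ℕ) ≠ 0)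
    exact h ▸ Real.rpow_le_rpow hA0.le hbound (by norm_num)
  rw [Real.rpow_add hA0, Real.rpow_one, div_le_iff₀ two_pos]
  calc (#A : ℝ) * #A ^ (1 / 587 : ℝ) ≤ #A * (2 * (N / #A)) := by gcongr
    _ = N * 2 := by field_simp

end

/-- Theorem 7: there is an absolute `κ > 0` such that for every prime `p`, every
`A ⊆ 𝔽_p^*` with `|A| ≤ p^{1/2 − 1/500}` and `f(x,y) = xy(x+y)`, one has
`max(|f(A,A)|, |A·A|) ≥ κ·|A|^{1 + 1/800}`. -/
theorem stmt_15 : ∃ κ : ℝ, 0 < κ ∧ ∀ (p : ℕ), p.Prime →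
    ∀ A : Finset (ZMod p), (∀ a ∈ A, a ≠ 0) →
      (A.card : ℝ) ≤ (p : ℝ) ^ ((1 : ℝ) / 2 - 1 / 500) →
      max ((Finset.image₂ (fun x y => x * y * (x + y)) A A).card : ℝ) ((A * A).card : ℝ) ≥
        κ * (A.card : ℝ) ^ ((1 : ℝ) + 1 / 800) := by
  refine ⟨1 / 2, one_half_pos, fun p hp A h0 hA => ?_⟩
  have : Fact p.Prime := ⟨hp⟩
  have hsq : A.card ^ 2 ≤ ringChar (ZMod p) := by
    rw [ZMod.ringChar_zmod_n]
    exact sq_le_of_natCast_le_rpow (by norm_num) (by norm_num) hA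
  have hexp : (A.card : ℝ) ^ ((1 : ℝ) + 1 / 800) ≤ (A.card : ℝ) ^ ((1 : ℝ) + 1 / 587) :=
    natCast_rpow_le_rpow _ (by norm_num) (by norm_num)
  linarith [stmt_15_general h0 (.inr hsq)]
end
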